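/- arXiv:1704.05377 — 2 statements merged into one kernel-verified Lean document; each statement's English description precedes it below -/
import Mathlib

section
/- Set u₀(x,t) = Σ_{n≥1} f_n sin(nx) ∫₀^t e^{-n²(t-s)} r₀(s) ds. Then u₀ is well defined and continuous on Π̄, and for every family (u_ω)_{ω≥1}, where u_ω is a classical solution of ∂u/∂t = ∂²u/∂x² + f(x)(r₀(t) + r₁(t,ωt)) in Π with u|_Γ = 0, one has sup_{(x,t)∈Π̄} |u_ω(x,t) − u₀(x,t)| → 0 as ω → ∞. -/
open Real Set

noncomputable section

/-- Mean value of a function over the period `[0, 2π]`. -/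
def pmean (g : ℝ → ℝ) : ℝ := (2 * π)⁻¹ * ∫ τ in (0:ℝ)..(2 * π), g τ

/-- `u` is a classical solution of `∂u/∂t = ∂²u/∂x² + F(x,t)` in `Π = (0,π)×(0,T)`
vanishing on the parabolic boundary `Γ`. -/
def IsClassicalSolution (T : ℝ) (F : ℝ → ℝ → ℝ) (u : ℝ → ℝ → ℝ) : Prop :=
  ContinuousOn (fun p : ℝ × ℝ => u p.1 p.2) (Icc 0 π ×ˢ Icc 0 T) ∧
  (∀ x ∈ Icc (0:ℝ) π, u x 0 = 0) ∧
  (∀ t ∈ Icc (0:ℝ) T, u 0 t = 0 ∧ u π t = 0) ∧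
  ∃ ut ux uxx : ℝ → ℝ → ℝ,
    ContinuousOn (fun p : ℝ × ℝ => ut p.1 p.2) (Ioo 0 π ×ˢ Ioo 0 T) ∧
    ContinuousOn (fun p : ℝ × ℝ => uxx p.1 p.2) (Ioo 0 π ×ˢ Ioo 0 T) ∧
    ∀ x ∈ Ioo (0:ℝ) π, ∀ t ∈ Ioo (0:ℝ) T,
      HasDerivAt (fun t' => u x t') (ut x t) t ∧
      HasDerivAt (fun x' => u x' t) (ux x t) x ∧
      HasDerivAt (fun x' => ux x' t) (uxx x t) x ∧
      ut x t = uxx x t + F x t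


lemma aux_coeff (g : ℝ → ℝ) (hg : Continuous g) (hodd : ∀ x, g (-x) = - g x) (hab : -π < π) (n : ℤ) :
    fourierCoeffOn hab (fun x => (g x : ℂ)) n =
      -(Complex.I / 2) * (((2 / π) * ∫ s in (0:ℝ)..π, g s * sin ((n:ℝ) * s) : ℝ) : ℂ) := by
  rw [fourierCoeffOn_eq_integral]
  have hE : ∀ x : ℝ, (fourier (-n) (x : AddCircle (π - -π)) : ℂ) = Complex.exp (-(n * x : ℝ) * Complex.I) := by
    intro x
    rw [fourier_coe_apply]
    congr 1
    push_cast
    have : (π : ℂ) ≠ 0 := by exact_mod_cast pi_ne_zero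
    field_simp
    ring
  simp_rw [hE, smul_eq_mul]
  set H : ℝ → ℂ := fun x => Complex.exp (-(n * x : ℝ) * Complex.I) * (g x : ℂ) with hH
  have hHc : Continuous H := by rw [hH]; fun_prop
  have h1 : ∫ x in (-π)..π, H x = (∫ x in (0:ℝ)..π, H (-x)) + ∫ x in (0:ℝ)..π, H x := by
    rw [intervalIntegral.integral_comp_neg, neg_zero,
      intervalIntegral.integral_add_adjacent_intervals] <;> exact hHc.intervalIntegrable _ _
  have h2 : ∫ x in (-π)..π, H x = ∫ x in (0:ℝ)..π, (-2 * Complex.I) * ((g x * sin (n * x) : ℝ) : ℂ) := by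
    have hHn : Continuous (fun x => H (-x)) := hHc.comp continuous_neg
    rw [h1, ← intervalIntegral.integral_add (hHn.intervalIntegrable _ _)
      (hHc.intervalIntegrable _ _)]
    apply intervalIntegral.integral_congr
    intro x _
    simp only [hH, hodd]
    push_cast
    rw [Complex.sin]
    have := Complex.I_sq
    have e : Complex.exp (-((n:ℂ) * -(x:ℂ)) * Complex.I) = Complex.exp ((n:ℂ) * (x:ℂ) * Complex.I) := by
      congr 1; ring
    rw [e]
    linear_combination (g x * (Complex.exp (-((n:ℂ) * (x:ℂ)) * Complex.I) - Complex.exp ((n:ℂ) * (x:ℂ) * Complex.I))) * this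
  rw [h2, intervalIntegral.integral_const_mul, intervalIntegral.integral_ofReal, Complex.real_smul]
  have : (π : ℂ) ≠ 0 := by exact_mod_cast pi_ne_zero
  push_cast
  field_simp
  ring

lemma fourier_main (f f' : ℝ → ℝ)
    (hf' : ∀ x ∈ Icc (0:ℝ) π, HasDerivWithinAt f (f' x) (Icc 0 π) x)
    (hf'c : ContinuousOn f' (Icc 0 π)) (hf0 : f 0 = 0) (hfπ : f π = 0)
    (fn : ℕ → ℝ)
    (hfn : ∀ n : ℕ, fn n = (2 / π) * ∫ s in (0:ℝ)..π, f s * sin ((n:ℝ) * s)) :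
    Summable (fun n : ℕ => |fn (n+1)|) ∧
    ∀ x ∈ Icc (0:ℝ) π, HasSum (fun n : ℕ => fn (n+1) * sin (((n:ℝ)+1) * x)) (f x) := by
  have hab : -π < π := by linarith [pi_pos]
  set k : ℝ → ℝ := IccExtend pi_pos.le ((Icc 0 π).domRestrict f') with hk
  have hkc : Continuous k := (continuousOn_iff_continuous_domRestrict.mp hf'c).Icc_extend'
  have hkf : ∀ x ∈ Icc (0:ℝ) π, k x = f' x := fun x hx => by
    rw [hk, IccExtend_of_mem _ _ hx]; rfl
  set h : ℝ → ℝ := fun x => k |x| with hh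
  have hhc : Continuous h := hkc.comp continuous_abs
  set g : ℝ → ℝ := fun x => ∫ s in (0:ℝ)..x, h s with hg
  have hgd : ∀ x, HasDerivAt g (h x) x := fun x => 
    hhc.integral_hasStrictDerivAt 0 x |>.hasDerivAt
  have hgc : Continuous g := continuous_iff_continuousAt.mpr fun x => (hgd x).continuousAt
  have hodd : ∀ x, g (-x) = - g x := by
    intro x
    have : ∫ s in (0:ℝ)..x, h (-s) = ∫ s in (-x)..(-0), h s := intervalIntegral.integral_comp_neg _
    simp only [hh, abs_neg, neg_zero] at this
    simp only [hg, hh]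
    rw [this, intervalIntegral.integral_symm]
  have hgf : ∀ x ∈ Icc (0:ℝ) π, g x = f x := by
    intro x hx
    have hsub : Icc 0 x ⊆ Icc 0 π := Icc_subset_Icc_right hx.2
    have := intervalIntegral.integral_eq_sub_of_hasDerivAt_of_le (f := f) (f' := h) hx.1
      (fun y hy => (hf' y (hsub hy)).continuousWithinAt.mono hsub) (fun y hy => by
        have hy' : y ∈ Icc 0 π := hsub (Ioo_subset_Icc_self hy)
        have : h y = f' y := by simp only [hh]; rw [abs_of_pos hy.1, hkf y hy']
        rw [this]
        exact (hf' y hy').hasDerivAt (Icc_mem_nhds hy.1 (hy.2.trans_le hx.2)))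
      (hhc.intervalIntegrable _ _)
    simp only [hg]; rw [this, hf0, sub_zero]
  have hgπ : g π = 0 := by rw [hgf π ⟨pi_pos.le, le_rfl⟩, hfπ]
  have hgmπ : g (-π) = 0 := by rw [hodd, hgπ, neg_zero]
  -- integer coefficients
  set b : ℤ → ℝ := fun n => (2 / π) * ∫ s in (0:ℝ)..π, g s * sin ((n:ℝ) * s) with hb
  have hbn : ∀ n : ℕ, b n = fn n := by
    intro n
    rw [hfn]; simp only [hb]
    congr 1
    apply intervalIntegral.integral_congr
    intro s hs
    rw [uIcc_of_le pi_pos.le] at hs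
    simp [hgf s hs]
  have hbneg : ∀ n : ℤ, b (-n) = - b n := by
    intro n
    simp only [hb]
    rw [← mul_neg, ← intervalIntegral.integral_neg]
    congr 1
    apply intervalIntegral.integral_congr
    intro s hs
    simp
  have hcoef := aux_coeff g hgc hodd hab
  -- summability
  have hL2 : MeasureTheory.MemLp (fun x => (h x : ℂ)) 2 (MeasureTheory.volume.restrict (Ioc (-π) π)) := by
    have hc : Continuous (fun x => (h x : ℂ)) := by fun_prop
    obtain ⟨B, hB⟩ := (isCompact_Icc (a := -π) (b := π)).exists_bound_of_continuousOn hc.continuousOn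
    refine MeasureTheory.MemLp.of_bound hc.aestronglyMeasurable B ?_
    refine (MeasureTheory.ae_restrict_iff' measurableSet_Ioc).mpr (Filter.Eventually.of_forall fun x hx => ?_)
    exact hB x (Ioc_subset_Icc_self hx)
  have hsq := (hasSum_sq_fourierCoeffOn hab hL2).summable
  have hrel : ∀ n : ℤ, n ≠ 0 → ‖fourierCoeffOn hab (fun x => (g x : ℂ)) n‖ = ‖fourierCoeffOn hab (fun x => (h x : ℂ)) n‖ / |(n:ℝ)| := by
    intro n hn
    rw [fourierCoeffOn_of_hasDerivAt hab hn (f' := fun x => (h x : ℂ)) (fun x _ => (hgd x).ofReal_comp)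
      (Continuous.intervalIntegrable (by fun_prop) _ _)]
    simp only [hgπ, hgmπ]
    have hp : |π| = π := abs_of_pos pi_pos
    have : ‖(π:ℂ) - -(π:ℂ)‖ = 2 * π := by
      rw [sub_neg_eq_add, ← two_mul]; simp [hp]
    simp only [Complex.ofReal_zero, sub_zero, mul_zero, zero_sub, norm_mul, norm_neg, norm_div]
    push_cast
    rw [this]
    simp [hp]
    have := pi_pos.ne'
    field_simp
  have hsum : Summable (fun n : ℤ => fourierCoeffOn hab (fun x => (g x : ℂ)) n) := by
    apply Summable.of_norm
    have h2 : Summable (fun n : ℤ => (1 : ℝ) / (n:ℝ)^2) := Real.summable_one_div_int_pow.mpr one_lt_two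
    refine Summable.of_nonneg_of_le (fun _ => norm_nonneg _) (fun n => ?_) (hsq.add h2)
    by_cases hn : n = 0
    · subst hn
      rw [hcoef 0]
      simp
    · rw [hrel n hn]
      set A := ‖fourierCoeffOn hab (fun x => (h x : ℂ)) n‖
      have e : (1:ℝ) / (n:ℝ)^2 = (1/|(n:ℝ)|)^2 := by rw [div_pow, sq_abs]; simp
      rw [e, div_eq_mul_one_div]
      have h3 := norm_nonneg (fourierCoeffOn hab (fun x => (h x : ℂ)) n)
      have h4 : 0 ≤ 1/|(n:ℝ)| := by positivity
      nlinarith [sq_nonneg (A - 1/|(n:ℝ)|)]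
  have hI : ∀ r : ℝ, ‖-(Complex.I / 2) * (r:ℂ)‖ = |r| / 2 := by
    intro r; simp; ring
  refine ⟨?_, ?_⟩
  · have h5 := hsum.norm.comp_injective (i := fun n : ℕ => ((n+1 : ℕ) : ℤ)) (fun a b hh => by simpa using hh)
    have h6 := h5.mul_left 2
    refine h6.congr (fun n => ?_)
    simp only [Function.comp]
    rw [hcoef, hI]
    rw [← hbn]
    simp only [hb]; ring
  · intro x hx
    have : Fact (0 < π - -π) := ⟨by linarith [pi_pos]⟩
    have hper : (fun x => (g x : ℂ)) (-π) = (fun x => (g x : ℂ)) (-π + (π - -π)) := by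
      simp [hgπ, hgmπ]
    have hcont : Continuous (AddCircle.liftIoc (π - -π) (-π) (fun x => (g x : ℂ))) := by
      rw [AddCircle.liftIoc_eq_liftIco hper]
      apply AddCircle.liftIco_continuous hper
      fun_prop
    have hs := has_pointwise_sum_fourier_series_of_summable (f := ⟨_, hcont⟩) hsum (x : AddCircle (π - -π))
    have hv : AddCircle.liftIoc (π - -π) (-π) (fun x => (g x : ℂ)) (x : AddCircle (π - -π)) = (f x : ℂ) := by
      rw [AddCircle.liftIoc_coe_apply ⟨by linarith [pi_pos, hx.1], by linarith [hx.2]⟩, hgf x hx]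
    have hs2 : HasSum (fun n : ℤ => -(Complex.I / 2) * (b n : ℂ) * Complex.exp ((n * x : ℝ) * Complex.I)) (f x : ℂ) := by
      have hs' : HasSum (fun i => fourierCoeff (AddCircle.liftIoc (π - -π) (-π) (fun x => (g x : ℂ))) i •
        (fourier i (x : AddCircle (π - -π)) : ℂ)) (AddCircle.liftIoc (π - -π) (-π) (fun x => (g x : ℂ)) (x : AddCircle (π - -π))) := hs
      rw [hv] at hs'
      convert hs' using 2 with n
      have e1 : fourierCoeff (AddCircle.liftIoc (π - -π) (-π) (fun x => (g x : ℂ))) n = -(Complex.I / 2) * (b n : ℂ) := hcoef n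
      change _ = fourierCoeff (AddCircle.liftIoc (π - -π) (-π) (fun x => (g x : ℂ))) n • _
      rw [e1, smul_eq_mul, fourier_coe_apply]
      congr 2
      push_cast
      have : (π : ℂ) ≠ 0 := by exact_mod_cast pi_ne_zero
      field_simp
      ring
    have hs3 := hs2.nat_add_neg
    have hb0 : b 0 = 0 := by simp [hb]
    simp only [hb0, Complex.ofReal_zero, mul_zero, zero_mul, add_zero] at hs3
    have hs4 : HasSum (fun n : ℕ => ((fn n * sin (n * x) : ℝ) : ℂ)) (f x : ℂ) := by
      convert hs3 using 2 with n
      rw [hbneg, hbn]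
      push_cast
      rw [Complex.sin]
      have e : Complex.exp (-(n:ℂ) * (x:ℂ) * Complex.I) = Complex.exp (-((n:ℂ) * (x:ℂ)) * Complex.I) := by
        congr 1; ring
      rw [e]
      ring
    have hs5 := Complex.hasSum_ofReal.mp hs4
    have hs6 := (hasSum_nat_add_iff' 1).mpr hs5
    simpa using hs6

open Filter Topology in
lemma maxprin (T M : ℝ) (hT : 0 < T) (w wt wx wxx : ℝ → ℝ → ℝ)
    (hc : ContinuousOn (fun p : ℝ × ℝ => w p.1 p.2) (Icc 0 π ×ˢ Icc 0 T))
    (h0 : ∀ x ∈ Icc (0:ℝ) π, w x 0 = 0)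
    (hl : ∀ t ∈ Icc (0:ℝ) T, w 0 t = 0 ∧ w π t = 0)
    (hM : 0 ≤ M)
    (hd : ∀ x ∈ Ioo (0:ℝ) π, ∀ t ∈ Ioo (0:ℝ) T,
      HasDerivAt (fun t' => w x t') (wt x t) t ∧
      HasDerivAt (fun x' => w x' t) (wx x t) x ∧
      HasDerivAt (fun x' => wx x' t) (wxx x t) x ∧
      wt x t ≤ wxx x t + M) :
    ∀ x ∈ Icc (0:ℝ) π, ∀ t ∈ Icc (0:ℝ) T, w x t ≤ M * t := by
  have key : ∀ ε > 0, ∀ x ∈ Icc (0:ℝ) π, ∀ t ∈ Ico (0:ℝ) T, w x t ≤ (M + ε) * t := by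
    intro ε hε x0 hx0 t0 ht0
    have hsub : Icc 0 π ×ˢ Icc 0 t0 ⊆ Icc 0 π ×ˢ Icc (0:ℝ) T :=
      prod_mono le_rfl (Icc_subset_Icc_right ht0.2.le)
    have hzc : ContinuousOn (fun p : ℝ × ℝ => w p.1 p.2 - (M + ε) * p.2) (Icc 0 π ×ˢ Icc 0 t0) :=
      (hc.mono hsub).sub (by fun_prop)
    obtain ⟨⟨x, t⟩, hp, hmax⟩ := (isCompact_Icc.prod isCompact_Icc).exists_isMaxOn
      ⟨(x0, t0), hx0, ht0.1, le_rfl⟩ hzc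
    have hle := hmax (show (x0, t0) ∈ Icc 0 π ×ˢ Icc 0 t0 from ⟨hx0, ht0.1, le_rfl⟩)
    simp only [mem_ofPred_eq] at hle
    have hx : x ∈ Icc 0 π := hp.1
    have ht : t ∈ Icc 0 t0 := hp.2
    have hMt : 0 ≤ (M + ε) * t := mul_nonneg (by linarith) ht.1
    suffices w x t - (M + ε) * t ≤ 0 by linarith
    by_contra hpos
    push Not at hpos
    have htT : t ∈ Icc 0 T := ⟨ht.1, ht.2.trans ht0.2.le⟩
    have hx1 : x ≠ 0 := by rintro rfl; linarith [(hl t htT).1]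
    have hx2 : x ≠ π := by rintro rfl; linarith [(hl t htT).2]
    have ht1 : t ≠ 0 := by rintro rfl; linarith [h0 x hx]
    have hx' : x ∈ Ioo 0 π := ⟨lt_of_le_of_ne hx.1 hx1.symm, lt_of_le_of_ne hx.2 hx2⟩
    have ht' : t ∈ Ioo 0 T := ⟨lt_of_le_of_ne ht.1 ht1.symm, ht.2.trans_lt ht0.2⟩
    obtain ⟨d1, d2, d3, d4⟩ := hd x hx' t ht'
    -- time derivative
    have e1 : M + ε ≤ wt x t := by
      have hD : HasDerivAt (fun t' => w x t' - (M + ε) * t') (wt x t - (M + ε) * 1) t :=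
        d1.sub ((hasDerivAt_id t).const_mul _)
      have hs := (hasDerivAt_iff_tendsto_slope.mp hD).mono_left
        (nhdsWithin_mono t (fun y (hy : y < t) => ne_of_lt hy) : 𝓝[<] t ≤ 𝓝[≠] t)
      have : 0 ≤ wt x t - (M + ε) * 1 := by
        refine ge_of_tendsto hs ?_
        filter_upwards [Ioo_mem_nhdsLT ht'.1] with y hy
        have hm := hmax (show (x, y) ∈ Icc 0 π ×ˢ Icc 0 t0 from ⟨hx, hy.1.le, hy.2.le.trans ht.2⟩)
        simp only [mem_ofPred_eq] at hm
        rw [slope_def_field]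
        exact div_nonneg_of_nonpos (by linarith) (by linarith [hy.2])
      linarith
    -- space derivative
    have hmaxx : IsLocalMax (fun x' => w x' t) x := by
      filter_upwards [Ioo_mem_nhds hx'.1 hx'.2] with y hy
      have hm := hmax (show (y, t) ∈ Icc 0 π ×ˢ Icc 0 t0 from ⟨Ioo_subset_Icc_self hy, ht⟩)
      simp only [mem_ofPred_eq] at hm
      linarith
    have hder : deriv (fun x' => w x' t) =ᶠ[𝓝 x] fun x' => wx x' t := by
      filter_upwards [Ioo_mem_nhds hx'.1 hx'.2] with y hy
      exact (hd y hy t ht').2.1.deriv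
    have hdd : deriv (deriv (fun x' => w x' t)) x = wxx x t := by
      rw [hder.deriv_eq]; exact d3.deriv
    have e2 : wxx x t ≤ 0 := by
      by_contra hc'
      push Not at hc'
      have hmin := isLocalMin_of_deriv_deriv_pos (f := fun x' => w x' t) (x₀ := x)
        (by rw [hdd]; exact hc') hmaxx.deriv_eq_zero d2.continuousAt
      have heq : (fun x' => w x' t) =ᶠ[𝓝 x] fun _ => w x t := by
        filter_upwards [hmaxx, hmin] with y h1 h2
        exact le_antisymm h1 h2
      have h3 : deriv (deriv (fun x' => w x' t)) x = 0 := by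
        rw [heq.deriv.deriv_eq]; simp
      linarith
    linarith
  have key2 : ∀ x ∈ Icc (0:ℝ) π, ∀ t ∈ Ico (0:ℝ) T, w x t ≤ M * t := by
    intro x hx t ht
    refine le_of_forall_pos_le_add fun δ hδ => ?_
    have := key (δ / T) (by positivity) x hx t ht
    have h2 : δ / T * t ≤ δ := by
      rw [div_mul_eq_mul_div, div_le_iff₀ hT]; nlinarith [ht.2]
    linarith
  intro x hx t ht
  rcases lt_or_eq_of_le ht.2 with h | h
  · exact key2 x hx t ⟨ht.1, h⟩
  · subst h
    have hcx : ContinuousOn (fun s => w x s) (Icc 0 t) :=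
      hc.comp (f := fun s => (x, s)) (by fun_prop) (fun s hs => ⟨hx, hs⟩)
    have ht2 : Tendsto (fun s => w x s) (𝓝[<] t) (𝓝 (w x t)) := by
      refine ((hcx t ht).tendsto).mono_left ?_
      rw [← nhdsWithin_Ioo_eq_nhdsLT hT]
      exact nhdsWithin_mono _ Ioo_subset_Icc_self
    have ht3 : Tendsto (fun s => M * s) (𝓝[<] t) (𝓝 (M * t)) :=
      (Continuous.tendsto (by fun_prop) t).mono_left nhdsWithin_le_nhds
    refine le_of_tendsto_of_tendsto ht2 ht3 ?_
    filter_upwards [Ioo_mem_nhdsLT hT] with s hs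
    exact key2 x hx s ⟨hs.1.le, hs.2⟩

def duh (l : ℝ) (r : ℝ → ℝ) (t : ℝ) : ℝ := ∫ s in (0:ℝ)..t, exp (-l * (t - s)) * r s

lemma duh_bound (T l R : ℝ) (hl : 0 ≤ l) (r : ℝ → ℝ) (hR : ∀ t ∈ Icc 0 T, |r t| ≤ R) :
    ∀ t ∈ Icc 0 T, |duh l r t| ≤ T * R := by
  intro t ht
  have hR0 : 0 ≤ R := (abs_nonneg _).trans (hR t ht)
  have := intervalIntegral.norm_integral_le_of_norm_le_const (a := 0) (b := t) (C := R)
    (f := fun s => exp (-l * (t - s)) * r s) (fun s hs => by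
      rw [uIoc_of_le ht.1] at hs
      rw [norm_mul, Real.norm_eq_abs, Real.norm_eq_abs, abs_of_pos (exp_pos _)]
      have h1 : exp (-l * (t - s)) ≤ 1 := exp_le_one_iff.mpr (by nlinarith [hs.2])
      have h2 := hR s ⟨hs.1.le, hs.2.trans ht.2⟩
      nlinarith [abs_nonneg (r s), exp_pos (-l * (t - s))])
  rw [Real.norm_eq_abs, sub_zero, abs_of_nonneg ht.1] at this
  unfold duh
  nlinarith [ht.2]

lemma duh_deriv_aux (T l : ℝ) (hT : 0 < T) (r : ℝ → ℝ) (hr : ContinuousOn r (Icc 0 T)) :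
    ∃ q : ℝ → ℝ, Continuous q ∧ (∀ t ∈ Icc 0 T, q t = r t) ∧
      (∀ t ∈ Icc 0 T, duh l q t = duh l r t) ∧
      (∀ t, HasDerivAt (duh l q) (q t - l * duh l q t) t) := by
  set k : ℝ → ℝ := IccExtend hT.le ((Icc 0 T).domRestrict r) with hk
  have hkc : Continuous k := (continuousOn_iff_continuous_domRestrict.mp hr).Icc_extend'
  have hkf : ∀ x ∈ Icc (0:ℝ) T, k x = r x := fun x hx => by
    rw [hk, IccExtend_of_mem _ _ hx]; rfl
  refine ⟨k, hkc, hkf, fun t ht => ?_, fun t => ?_⟩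
  · apply intervalIntegral.integral_congr
    intro s hs
    rw [uIcc_of_le ht.1] at hs
    simp only [hkf s ⟨hs.1, hs.2.trans ht.2⟩]
  · have hform : ∀ t, duh l k t = exp (-l * t) * ∫ s in (0:ℝ)..t, exp (l * s) * k s := by
      intro t
      rw [duh, ← intervalIntegral.integral_const_mul]
      congr 1; ext s
      rw [← mul_assoc, ← exp_add]; congr 2; ring
    have hi : HasDerivAt (fun t => ∫ s in (0:ℝ)..t, exp (l * s) * k s) (exp (l * t) * k t) t :=
      (Continuous.integral_hasStrictDerivAt (by fun_prop) 0 t).hasDerivAt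
    have he : HasDerivAt (fun t => exp (-l * t)) (exp (-l * t) * (-l * 1)) t :=
      ((hasDerivAt_id t).const_mul (-l)).exp
    have := he.mul hi
    rw [show duh l k = fun t => exp (-l * t) * ∫ s in (0:ℝ)..t, exp (l * s) * k s from funext hform]
    refine this.congr_deriv ?_
    have e : exp (-l * t) * exp (l * t) = 1 := by rw [← exp_add]; simp
    linear_combination k t * e

lemma duh_cont (T l : ℝ) (hT : 0 < T) (r : ℝ → ℝ) (hr : ContinuousOn r (Icc 0 T)) :
    ContinuousOn (duh l r) (Icc 0 T) := by
  obtain ⟨q, _, _, h3, h4⟩ := duh_deriv_aux T l hT r hr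
  have : ContinuousOn (duh l q) (Icc 0 T) := fun t _ => (h4 t).continuousAt.continuousWithinAt
  exact this.congr fun t ht => (h3 t ht).symm

lemma duh_deriv (T l : ℝ) (hT : 0 < T) (r : ℝ → ℝ) (hr : ContinuousOn r (Icc 0 T)) :
    ∀ t ∈ Ioo 0 T, HasDerivAt (duh l r) (r t - l * duh l r t) t := by
  obtain ⟨q, _, h2, h3, h4⟩ := duh_deriv_aux T l hT r hr
  intro t ht
  have ht' := Ioo_subset_Icc_self ht
  rw [← h2 t ht', ← h3 t ht']
  refine (h4 t).congr_of_eventuallyEq ?_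
  filter_upwards [Ioo_mem_nhds ht.1 ht.2] with s hs
  exact (h3 s (Ioo_subset_Icc_self hs)).symm

lemma per_nat (T : ℝ) (r1 : ℝ → ℝ → ℝ)
    (hper : ∀ t ∈ Icc (0:ℝ) T, ∀ τ ∈ Ici (0:ℝ), r1 t (τ + 2 * π) = r1 t τ) (k : ℕ) :
    ∀ t ∈ Icc (0:ℝ) T, ∀ τ ∈ Ici (0:ℝ), r1 t (τ + k * (2 * π)) = r1 t τ := by
  intro t ht τ hτ
  induction k with
  | zero => simp
  | succ k ih =>
    have h1 : τ + ((k + 1 : ℕ) : ℝ) * (2 * π) = (τ + k * (2 * π)) + 2 * π := by push_cast; ring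
    rw [h1, hper t ht _ (by have := pi_pos; have h2 : (0:ℝ) ≤ τ := hτ; simp only [mem_Ici]; positivity), ih]

lemma r1_bound (T : ℝ) (r1 : ℝ → ℝ → ℝ)
    (hper : ∀ t ∈ Icc (0:ℝ) T, ∀ τ ∈ Ici (0:ℝ), r1 t (τ + 2 * π) = r1 t τ)
    (hr1c : ContinuousOn (fun p : ℝ × ℝ => r1 p.1 p.2) (Icc 0 T ×ˢ Ici 0)) :
    ∃ M, 0 ≤ M ∧ ∀ t ∈ Icc (0:ℝ) T, ∀ τ ∈ Ici (0:ℝ), |r1 t τ| ≤ M := by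
  have h2pi : 0 < 2 * π := by positivity
  obtain ⟨M, hM⟩ := (isCompact_Icc.prod isCompact_Icc).exists_bound_of_continuousOn
    (hr1c.mono (prod_mono le_rfl (Icc_subset_Ici_self : Icc 0 (2 * π) ⊆ Ici 0)))
  refine ⟨max M 0, le_max_right _ _, fun t ht τ hτ => le_max_of_le_left ?_⟩
  have hτ0 : (0:ℝ) ≤ τ := hτ
  set k := ⌊τ / (2 * π)⌋₊
  have h1 : (k:ℝ) * (2 * π) ≤ τ := by
    rw [← le_div_iff₀ h2pi]; exact Nat.floor_le (by positivity)
  have h2 : τ < (k + 1 : ℝ) * (2 * π) := by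
    rw [← div_lt_iff₀ h2pi]; exact Nat.lt_floor_add_one _
  have h3 := per_nat T r1 hper k t ht (τ - k * (2 * π)) (by simp only [mem_Ici]; linarith)
  rw [sub_add_cancel] at h3
  rw [h3]
  exact hM (t, τ - k * (2 * π)) ⟨ht, by simp only; linarith, by simp only; linarith⟩

lemma avg_bound (T : ℝ) (hT : 0 < T) (r1 : ℝ → ℝ → ℝ)
    (hper : ∀ t ∈ Icc (0:ℝ) T, ∀ τ ∈ Ici (0:ℝ), r1 t (τ + 2 * π) = r1 t τ)
    (hzero : ∀ t ∈ Icc (0:ℝ) T, (∫ τ in (0:ℝ)..(2 * π), r1 t τ) = 0)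
    (α : ℝ) (hα : α ∈ Ioo (0:ℝ) 1) (C : ℝ) (hC : 0 ≤ C)
    (hr1c : ContinuousOn (fun p : ℝ × ℝ => r1 p.1 p.2) (Icc 0 T ×ˢ Ici 0))
    (hr1hold : ∀ τ ∈ Ici (0:ℝ), ∀ t ∈ Icc (0:ℝ) T, ∀ t' ∈ Icc (0:ℝ) T,
      |r1 t τ - r1 t' τ| ≤ C * |t - t'| ^ α)
    (M : ℝ) (hM0 : 0 ≤ M) (hM : ∀ t ∈ Icc (0:ℝ) T, ∀ τ ∈ Ici (0:ℝ), |r1 t τ| ≤ M)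
    (l : ℝ) (hl : 0 ≤ l) (ω : ℝ) (hω : 1 ≤ ω) :
    ∀ t ∈ Icc (0:ℝ) T, |duh l (fun s => r1 s (ω * s)) t| ≤
      T * (C * (2 * π / ω) ^ α + l * (2 * π / ω) * M) + M * (2 * π / ω) := by
  intro t ht
  have hω0 : 0 < ω := by linarith
  set h := 2 * π / ω with hh
  have hh0 : 0 < h := by positivity
  have hωh : ω * h = 2 * π := by rw [hh]; field_simp
  set δ := C * h ^ α + l * h * M with hδ
  have hδ0 : 0 ≤ δ := by positivity
  set G : ℝ → ℝ := fun s => exp (-l * (t - s)) * r1 s (ω * s) with hG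
  have hGc : ContinuousOn G (Icc 0 T) := by
    refine ContinuousOn.mul (by fun_prop) ?_
    exact hr1c.comp (f := fun s => (s, ω * s)) (by fun_prop)
      (fun s hs => ⟨hs, mul_nonneg hω0.le hs.1⟩)
  have hGi : ∀ a b, 0 ≤ a → a ≤ b → b ≤ T → IntervalIntegrable G MeasureTheory.volume a b := by
    intro a b ha hab hb
    refine ContinuousOn.intervalIntegrable_of_Icc hab (hGc.mono (Icc_subset_Icc ha hb))
  have hGM : ∀ s ∈ Icc 0 t, |G s| ≤ M := by
    intro s hs
    simp only [hG]
    rw [abs_mul, abs_of_pos (exp_pos _)]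
    have h1 : exp (-l * (t - s)) ≤ 1 := exp_le_one_iff.mpr (by nlinarith [hs.2])
    have h2 := hM s ⟨hs.1, hs.2.trans ht.2⟩ (ω * s) (mul_nonneg hω0.le hs.1)
    nlinarith [abs_nonneg (r1 s (ω * s)), exp_pos (-l * (t - s))]
  have cell : ∀ k : ℕ, (k:ℝ) * h + h ≤ t → |∫ s in (k * h : ℝ)..(k * h + h), G s| ≤ δ * h := by
    intro k hk
    set a : ℝ := k * h with ha
    have ha0 : 0 ≤ a := by positivity
    have haT : a ∈ Icc 0 T := ⟨ha0, by linarith [ht.2]⟩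
    have hz : ∫ s in a..(a + h), r1 a (ω * s) = 0 := by
      rw [intervalIntegral.integral_comp_mul_left _ hω0.ne', mul_add, hωh]
      have e1 : ω * a = 0 + k * (2 * π) := by rw [ha, ← hωh]; ring
      have e2 : ω * a + 2 * π = 2 * π + k * (2 * π) := by rw [e1]; ring
      rw [e2, e1, ← intervalIntegral.integral_comp_add_right (fun τ => r1 a τ)]
      have e3 : ∫ τ in (0:ℝ)..(2 * π), r1 a (τ + k * (2 * π)) = ∫ τ in (0:ℝ)..(2 * π), r1 a τ := by
        apply intervalIntegral.integral_congr
        intro τ hτ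
        rw [uIcc_of_le (by positivity)] at hτ
        exact per_nat T r1 hper k a haT τ hτ.1
      rw [e3, hzero a haT, smul_zero]
    have hrc : ContinuousOn (fun s => exp (-l * (t - a)) * r1 a (ω * s)) (Icc a (a + h)) := by
      refine ContinuousOn.mul (by fun_prop) ?_
      exact hr1c.comp (f := fun s => (a, ω * s)) (by fun_prop)
        (fun s hs => ⟨haT, mul_nonneg hω0.le (ha0.trans hs.1)⟩)
    have hsub : ∫ s in a..(a + h), G s =
        ∫ s in a..(a + h), (G s - exp (-l * (t - a)) * r1 a (ω * s)) := by
      rw [intervalIntegral.integral_sub (hGi _ _ ha0 (by linarith) (by linarith [ht.2]))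
        (hrc.intervalIntegrable_of_Icc (by linarith)), intervalIntegral.integral_const_mul, hz]
      simp
    rw [hsub]
    have := intervalIntegral.norm_integral_le_of_norm_le_const (a := a) (b := a + h) (C := δ)
      (f := fun s => G s - exp (-l * (t - a)) * r1 a (ω * s)) (fun s hs => by
        rw [uIoc_of_le (by linarith)] at hs
        rw [Real.norm_eq_abs]
        have hs0 : 0 ≤ s := ha0.trans hs.1.le
        have hst : s ≤ t := hs.2.trans hk
        have hωs : ω * s ∈ Ici (0:ℝ) := mul_nonneg hω0.le hs0
        have hsT : s ∈ Icc 0 T := ⟨hs0, hst.trans ht.2⟩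
        have b1 := hr1hold (ω * s) hωs s hsT a haT
        have b2 := hM a haT (ω * s) hωs
        have b3 : |s - a| ^ α ≤ h ^ α := by
          apply Real.rpow_le_rpow (abs_nonneg _) _ hα.1.le
          rw [abs_of_pos (by linarith [hs.1])]; linarith [hs.2]
        have b4 : exp (-l * (t - s)) ≤ 1 := exp_le_one_iff.mpr (by nlinarith)
        have b5 : exp (-l * (t - a)) ≤ exp (-l * (t - s)) := exp_le_exp.mpr (by nlinarith [hs.1])
        have b6 : exp (-l * (t - s)) - exp (-l * (t - a)) ≤ l * h := by
          have e : exp (-l * (t - a)) = exp (-l * (t - s)) * exp (-l * (s - a)) := by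
            rw [← exp_add]; congr 1; ring
          have e' := add_one_le_exp (-l * (s - a))
          have e0 := exp_pos (-l * (t - s))
          have e1 : 1 - exp (-l * (s - a)) ≤ l * h := by nlinarith [hs.2]
          have e2 : 0 ≤ l * h := by positivity
          rw [e]; nlinarith
        have b0 := exp_pos (-l * (t - s))
        have split : G s - exp (-l * (t - a)) * r1 a (ω * s) =
            exp (-l * (t - s)) * (r1 s (ω * s) - r1 a (ω * s)) +
            (exp (-l * (t - s)) - exp (-l * (t - a))) * r1 a (ω * s) := by
          simp only [hG]; ring
        rw [split]
        refine (abs_add_le _ _).trans ?_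
        rw [abs_mul, abs_mul, abs_of_pos b0, abs_of_nonneg (sub_nonneg.mpr b5)]
        refine add_le_add ?_ ?_
        · have : C * |s - a| ^ α ≤ C * h ^ α := mul_le_mul_of_nonneg_left b3 hC
          nlinarith [abs_nonneg (r1 s (ω * s) - r1 a (ω * s))]
        · exact mul_le_mul b6 b2 (abs_nonneg _) (by positivity))
    rw [Real.norm_eq_abs, add_sub_cancel_left, abs_of_pos hh0] at this
    exact this
  have ind : ∀ k : ℕ, (k:ℝ) * h ≤ t → |∫ s in (0:ℝ)..(k * h), G s| ≤ k * (δ * h) := by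
    intro k
    induction k with
    | zero => intro _; simp
    | succ k ih =>
      intro hk
      push_cast at hk ⊢
      have hk' : (k:ℝ) * h + h ≤ t := by linarith
      have h0k : 0 ≤ (k:ℝ) * h := by positivity
      rw [show ((k:ℝ) + 1) * h = k * h + h by ring,
        ← intervalIntegral.integral_add_adjacent_intervals
          (hGi 0 (k * h) le_rfl h0k (by linarith [ht.2]))
          (hGi (k * h) (k * h + h) h0k (by linarith) (by linarith [ht.2]))]
      refine (abs_add_le _ _).trans ?_
      have := ih (by linarith)
      have := cell k hk'
      linarith
  set k := ⌊t / h⌋₊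
  have h1 : (k:ℝ) * h ≤ t := by
    rw [← le_div_iff₀ hh0]; exact Nat.floor_le (div_nonneg ht.1 hh0.le)
  have h2 : t < (k + 1 : ℝ) * h := by
    rw [← div_lt_iff₀ hh0]; exact Nat.lt_floor_add_one _
  have h0k : 0 ≤ (k:ℝ) * h := by positivity
  have hrem : |∫ s in (k * h : ℝ)..t, G s| ≤ M * h := by
    have := intervalIntegral.norm_integral_le_of_norm_le_const (a := k * h) (b := t) (C := M)
      (f := G) (fun s hs => by
        rw [uIoc_of_le h1] at hs
        exact hGM s ⟨h0k.trans hs.1.le, hs.2⟩)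
    rw [Real.norm_eq_abs, abs_of_nonneg (by linarith : 0 ≤ t - k * h)] at this
    nlinarith
  have hk := ind k h1
  have htot : duh l (fun s => r1 s (ω * s)) t = (∫ s in (0:ℝ)..(k * h), G s) + ∫ s in (k * h : ℝ)..t, G s := by
    rw [intervalIntegral.integral_add_adjacent_intervals (hGi 0 (k * h) le_rfl h0k (by linarith [ht.2]))
          (hGi (k * h) t h0k h1 ht.2)]
    rfl
  rw [htot]
  refine (abs_add_le _ _).trans ?_
  have : k * (δ * h) ≤ T * δ := by nlinarith [ht.2]
  linarith

open Filter Topology in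
lemma avg_lim (T : ℝ) (hT : 0 < T) (r1 : ℝ → ℝ → ℝ)
    (hper : ∀ t ∈ Icc (0:ℝ) T, ∀ τ ∈ Ici (0:ℝ), r1 t (τ + 2 * π) = r1 t τ)
    (hzero : ∀ t ∈ Icc (0:ℝ) T, (∫ τ in (0:ℝ)..(2 * π), r1 t τ) = 0)
    (α : ℝ) (hα : α ∈ Ioo (0:ℝ) 1) (C : ℝ)
    (hr1c : ContinuousOn (fun p : ℝ × ℝ => r1 p.1 p.2) (Icc 0 T ×ˢ Ici 0))
    (hr1hold : ∀ τ ∈ Ici (0:ℝ), ∀ t ∈ Icc (0:ℝ) T, ∀ t' ∈ Icc (0:ℝ) T,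
      |r1 t τ - r1 t' τ| ≤ C * |t - t'| ^ α)
    (l : ℝ) (hl : 0 ≤ l) (ε : ℝ) (hε : 0 < ε) :
    ∀ᶠ ω in atTop, ∀ t ∈ Icc (0:ℝ) T, |duh l (fun s => r1 s (ω * s)) t| ≤ ε := by
  obtain ⟨M, hM0, hM⟩ := r1_bound T r1 hper hr1c
  have hC : 0 ≤ C := by
    have h1 := (abs_nonneg _).trans (hr1hold 0 self_mem_Ici T ⟨hT.le, le_rfl⟩ 0 ⟨le_rfl, hT.le⟩)
    have h2 : 0 < |T - 0| ^ α := Real.rpow_pos_of_pos (by simpa using hT.ne') _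
    by_contra h3
    push Not at h3
    nlinarith
  have hh : Tendsto (fun ω : ℝ => 2 * π / ω) atTop (𝓝 0) := tendsto_const_nhds.div_atTop tendsto_id
  have hh2 : Tendsto (fun ω : ℝ => (2 * π / ω) ^ α) atTop (𝓝 0) := by
    have := hh.rpow_const (p := α) (Or.inr hα.1.le)
    rwa [Real.zero_rpow hα.1.ne'] at this
  have hlim : Tendsto (fun ω : ℝ => T * (C * (2 * π / ω) ^ α + l * (2 * π / ω) * M) + M * (2 * π / ω)) atTop (𝓝 0) := by
    have := (((hh2.const_mul C).add ((hh.const_mul l).mul_const M)).const_mul T).add (hh.const_mul M)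
    simpa using this
  filter_upwards [hlim.eventually_le_const hε, eventually_ge_atTop 1] with ω h1 h2 t ht
  exact (avg_bound T hT r1 hper hzero α hα C hC hr1c hr1hold M hM0 hM l hl ω h2 t ht).trans h1

lemma tail_bound (g b : ℕ → ℝ) (S : ℝ) (hg : HasSum g S) (hb : Summable b) (h : ∀ n, |g n| ≤ b n) (N : ℕ) :
    |S - ∑ n ∈ Finset.range N, g n| ≤ ∑' n, b (n + N) := by
  have h1 := (hasSum_nat_add_iff' N).mpr hg
  have hb' : Summable (fun n => b (n + N)) := (summable_nat_add_iff N).mpr hb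
  rw [← h1.tsum_eq]
  have h2 : Summable (fun n => ‖g (n + N)‖) :=
    Summable.of_nonneg_of_le (fun _ => norm_nonneg _) (fun n => h (n + N)) hb'
  exact (norm_tsum_le_tsum_norm h2).trans (h2.tsum_le_tsum (fun n => h (n + N)) hb')

lemma approx (T : ℝ) (hT : 0 < T) (f r : ℝ → ℝ) (R η : ℝ) (hR0 : 0 ≤ R) (hη : 0 ≤ η)
    (hr : ContinuousOn r (Icc 0 T)) (hR : ∀ t ∈ Icc 0 T, |r t| ≤ R)
    (a : ℕ → ℝ) (N : ℕ)
    (hf : ∀ x ∈ Icc 0 π, |f x - ∑ n ∈ Finset.range N, a n * sin (((n:ℝ)+1) * x)| ≤ η)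
    (u : ℝ → ℝ → ℝ) (hu : IsClassicalSolution T (fun x t => f x * r t) u) :
    ∀ x ∈ Icc 0 π, ∀ t ∈ Icc 0 T,
      |u x t - ∑ n ∈ Finset.range N, a n * sin (((n:ℝ)+1) * x) * duh (((n:ℝ)+1)^2) r t| ≤ η * R * T := by
  obtain ⟨huc, hu0, hul, ut, ux, uxx, -, -, hud⟩ := hu
  set v : ℝ → ℝ → ℝ := fun x t => ∑ n ∈ Finset.range N, a n * sin (((n:ℝ)+1) * x) * duh (((n:ℝ)+1)^2) r t with hv
  set vt : ℝ → ℝ → ℝ := fun x t => ∑ n ∈ Finset.range N, a n * sin (((n:ℝ)+1) * x) * (r t - ((n:ℝ)+1)^2 * duh (((n:ℝ)+1)^2) r t) with hvt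
  set vx : ℝ → ℝ → ℝ := fun x t => ∑ n ∈ Finset.range N, a n * (cos (((n:ℝ)+1) * x) * ((n:ℝ)+1)) * duh (((n:ℝ)+1)^2) r t with hvx
  set vxx : ℝ → ℝ → ℝ := fun x t => ∑ n ∈ Finset.range N, a n * (-sin (((n:ℝ)+1) * x) * ((n:ℝ)+1) * ((n:ℝ)+1)) * duh (((n:ℝ)+1)^2) r t with hvxx
  have hvc : ContinuousOn (fun p : ℝ × ℝ => v p.1 p.2) (Icc 0 π ×ˢ Icc 0 T) := by
    simp only [hv]
    refine continuousOn_finsetSum _ fun n _ => ContinuousOn.mul (by fun_prop) ?_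
    exact (duh_cont T _ hT r hr).comp continuousOn_snd (fun p hp => hp.2)
  have hv0 : ∀ x, v x 0 = 0 := fun x => by simp [hv, duh]
  have hvl : ∀ t, v 0 t = 0 ∧ v π t = 0 := fun t => by
    refine ⟨by simp [hv], ?_⟩
    refine Finset.sum_eq_zero fun n _ => ?_
    have : sin (((n:ℝ)+1) * π) = 0 := by exact_mod_cast sin_nat_mul_pi (n+1)
    rw [this]; ring
  have hlin : ∀ (n : ℕ) (x : ℝ), HasDerivAt (fun x : ℝ => ((n:ℝ)+1) * x) ((n:ℝ)+1) x := fun n x => by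
    simpa using (hasDerivAt_id x).const_mul ((n:ℝ)+1)
  have hvd : ∀ x ∈ Ioo (0:ℝ) π, ∀ t ∈ Ioo (0:ℝ) T,
      HasDerivAt (fun t' => v x t') (vt x t) t ∧
      HasDerivAt (fun x' => v x' t) (vx x t) x ∧
      HasDerivAt (fun x' => vx x' t) (vxx x t) x ∧
      vt x t = vxx x t + (∑ n ∈ Finset.range N, a n * sin (((n:ℝ)+1) * x)) * r t := by
    intro x hx t ht
    refine ⟨?_, ?_, ?_, ?_⟩
    · exact HasDerivAt.fun_sum fun n _ => (duh_deriv T _ hT r hr t ht).const_mul _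
    · exact HasDerivAt.fun_sum fun n _ => (((hlin n x).sin).const_mul _).mul_const _
    · refine HasDerivAt.fun_sum fun n _ => ((((hlin n x).cos).mul_const _).const_mul _).mul_const _
    · simp only [hvt, hvxx]
      rw [Finset.sum_mul, ← Finset.sum_add_distrib]
      refine Finset.sum_congr rfl fun n _ => ?_
      ring
  have hbd : ∀ x ∈ Ioo (0:ℝ) π, ∀ t ∈ Ioo (0:ℝ) T,
      |f x * r t - (∑ n ∈ Finset.range N, a n * sin (((n:ℝ)+1) * x)) * r t| ≤ η * R := by
    intro x hx t ht
    rw [← sub_mul, abs_mul]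
    exact mul_le_mul (hf x (Ioo_subset_Icc_self hx)) (hR t (Ioo_subset_Icc_self ht)) (abs_nonneg _) hη
  have hηR : 0 ≤ η * R := mul_nonneg hη hR0
  intro x hx t ht
  have p1 := maxprin T (η * R) hT (fun x t => u x t - v x t) (fun x t => ut x t - vt x t)
    (fun x t => ux x t - vx x t) (fun x t => uxx x t - vxx x t) (huc.sub hvc)
    (fun x hx => by simp [hu0 x hx, hv0]) (fun t ht => by simp [hul t ht, hvl t]) hηR
    (fun x hx t ht => by
      obtain ⟨a1, a2, a3, a4⟩ := hud x hx t ht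
      obtain ⟨b1, b2, b3, b4⟩ := hvd x hx t ht
      refine ⟨a1.sub b1, a2.sub b2, a3.sub b3, ?_⟩
      have := (abs_le.mp (hbd x hx t ht)).2
      simp only at a4 ⊢
      linarith) x hx t ht
  have p2 := maxprin T (η * R) hT (fun x t => v x t - u x t) (fun x t => vt x t - ut x t)
    (fun x t => vx x t - ux x t) (fun x t => vxx x t - uxx x t) (hvc.sub huc)
    (fun x hx => by simp [hu0 x hx, hv0]) (fun t ht => by simp [hul t ht, hvl t]) hηR
    (fun x hx t ht => by
      obtain ⟨a1, a2, a3, a4⟩ := hud x hx t ht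
      obtain ⟨b1, b2, b3, b4⟩ := hvd x hx t ht
      refine ⟨b1.sub a1, b2.sub a2, b3.sub a3, ?_⟩
      have := (abs_le.mp (hbd x hx t ht)).1
      simp only at a4 ⊢
      linarith) x hx t ht
  have p3 : η * R * t ≤ η * R * T := mul_le_mul_of_nonneg_left ht.2 hηR
  exact abs_le.mpr ⟨by linarith, by linarith⟩

/-- **Theorem 3.** The leading term of the asymptotics: the averaged series `u₀` is well
defined and continuous on `Π̄` and the solutions `u_ω` converge to it uniformly on `Π̄`. -/
theorem leading_term_asymptotics
    (T : ℝ) (hT : 0 < T)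
    -- `f ∈ C¹([0,π])`, `f(0) = f(π) = 0`
    (f f' : ℝ → ℝ)
    (hf' : ∀ x ∈ Icc (0:ℝ) π, HasDerivWithinAt f (f' x) (Icc 0 π) x)
    (hf'c : ContinuousOn f' (Icc 0 π)) (hf0 : f 0 = 0) (hfπ : f π = 0)
    -- `r₀` continuous, `r₁` of class `C^{α,0}`, 2π-periodic in `τ` with zero mean
    (r0 : ℝ → ℝ) (r1 : ℝ → ℝ → ℝ)
    (hr0 : ContinuousOn r0 (Icc 0 T))
    (hper : ∀ t ∈ Icc (0:ℝ) T, ∀ τ ∈ Ici (0:ℝ), r1 t (τ + 2 * π) = r1 t τ)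
    (hzero : ∀ t ∈ Icc (0:ℝ) T, (∫ τ in (0:ℝ)..(2 * π), r1 t τ) = 0)
    (α : ℝ) (hα : α ∈ Ioo (0:ℝ) 1) (C : ℝ)
    (hr1c : ContinuousOn (fun p : ℝ × ℝ => r1 p.1 p.2) (Icc 0 T ×ˢ Ici 0))
    (hr1hold : ∀ τ ∈ Ici (0:ℝ), ∀ t ∈ Icc (0:ℝ) T, ∀ t' ∈ Icc (0:ℝ) T,
      |r1 t τ - r1 t' τ| ≤ C * |t - t'| ^ α)
    -- Fourier coefficients of `f` and the averaged solution `u₀`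
    (fn : ℕ → ℝ)
    (hfn : ∀ n : ℕ, fn n = (2 / π) * ∫ s in (0:ℝ)..π, f s * sin ((n:ℝ) * s))
    (u0 : ℝ → ℝ → ℝ)
    (hu0 : ∀ x t, u0 x t = ∑' n : ℕ, fn (n + 1) * sin (((n:ℝ) + 1) * x) *
      ∫ s in (0:ℝ)..t, exp (-((n:ℝ) + 1) ^ 2 * (t - s)) * r0 s) :
    -- `u₀` is well defined (the series converges) and continuous on `Π̄`
    (∀ x ∈ Icc (0:ℝ) π, ∀ t ∈ Icc (0:ℝ) T,
      Summable fun n : ℕ => fn (n + 1) * sin (((n:ℝ) + 1) * x) *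
        ∫ s in (0:ℝ)..t, exp (-((n:ℝ) + 1) ^ 2 * (t - s)) * r0 s) ∧
    ContinuousOn (fun p : ℝ × ℝ => u0 p.1 p.2) (Icc 0 π ×ˢ Icc 0 T) ∧
    -- uniform convergence `‖u_ω − u₀‖_{C(Π̄)} = o(1)`, `ω → ∞`
    (∀ u : ℝ → ℝ → ℝ → ℝ,
      (∀ ω : ℝ, 1 ≤ ω →
        IsClassicalSolution T (fun x t => f x * (r0 t + r1 t (ω * t))) (u ω)) →
      ∀ ε > 0, ∃ ω₀ ≥ (1:ℝ), ∀ ω ≥ ω₀, ∀ x ∈ Icc (0:ℝ) π, ∀ t ∈ Icc (0:ℝ) T,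
        |u ω x t - u0 x t| ≤ ε) := by
  obtain ⟨hsum, hfour⟩ := fourier_main f f' hf' hf'c hf0 hfπ fn hfn
  obtain ⟨R0, hR0⟩ := isCompact_Icc.exists_bound_of_continuousOn hr0
  obtain ⟨M, hM0, hM⟩ := r1_bound T r1 hper hr1c
  have hR0' : 0 ≤ R0 := (norm_nonneg _).trans (hR0 0 ⟨le_rfl, hT.le⟩)
  have hu0' : ∀ x t, u0 x t = ∑' n : ℕ, fn (n + 1) * sin (((n:ℝ) + 1) * x) * duh (((n:ℝ) + 1)^2) r0 t := hu0
  have hb : ∀ x, ∀ t ∈ Icc (0:ℝ) T, ∀ n : ℕ,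
      |fn (n + 1) * sin (((n:ℝ) + 1) * x) * duh (((n:ℝ) + 1)^2) r0 t| ≤ |fn (n + 1)| * (T * R0) := by
    intro x t ht n
    rw [abs_mul, abs_mul]
    have h1 := abs_sin_le_one (((n:ℝ) + 1) * x)
    have h2 := duh_bound T (((n:ℝ) + 1)^2) R0 (by positivity) r0 hR0 t ht
    refine mul_le_mul ?_ h2 (abs_nonneg _) (abs_nonneg _)
    nlinarith [abs_nonneg (fn (n+1))]
  have hsumb : Summable (fun n : ℕ => |fn (n + 1)| * (T * R0)) := hsum.mul_right _
  have hS : ∀ x, ∀ t ∈ Icc (0:ℝ) T,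
      Summable fun n : ℕ => fn (n + 1) * sin (((n:ℝ) + 1) * x) * duh (((n:ℝ) + 1)^2) r0 t :=
    fun x t ht => Summable.of_norm_bounded hsumb (hb x t ht)
  refine ⟨fun x _ t ht => hS x t ht, ?_, ?_⟩
  · simp only [hu0']
    refine continuousOn_tsum (fun n => ?_) hsumb (fun n p hp => hb p.1 p.2 hp.2 n)
    refine ContinuousOn.mul (by fun_prop) ?_
    exact (duh_cont T _ hT r0 hr0).comp continuousOn_snd (fun p hp => hp.2)
  · intro u hu ε hε
    set tail : ℕ → ℝ := fun N => ∑' n, |fn (n + N + 1)| with htail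
    have htail0 : ∀ N, 0 ≤ tail N := fun N => tsum_nonneg fun _ => abs_nonneg _
    have htl : Filter.Tendsto tail Filter.atTop (nhds 0) :=
      tendsto_sum_nat_add (fun n => |fn (n + 1)|)
    set K : ℝ := (R0 + M) * T + T * R0 + 1 with hK
    have hKpos : 0 < K := by positivity
    obtain ⟨N, hN⟩ := (htl.eventually_le_const (show 0 < ε / 2 / K by positivity)).exists
    have hNK : tail N * K ≤ ε / 2 := (le_div_iff₀ hKpos).mp hN
    set A : ℝ := ∑' n, |fn (n + 1)| with hA
    have hA0 : 0 ≤ A := tsum_nonneg fun _ => abs_nonneg _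
    have hav : ∀ᶠ ω in Filter.atTop, ∀ n ∈ Finset.range N, ∀ t ∈ Icc (0:ℝ) T,
        |duh (((n:ℝ) + 1)^2) (fun s => r1 s (ω * s)) t| ≤ ε / 2 / (A + 1) := by
      rw [Filter.eventually_all_finset]
      intro n _
      exact avg_lim T hT r1 hper hzero α hα C hr1c hr1hold _ (by positivity) _ (by positivity)
    obtain ⟨ω₁, hω₁⟩ := Filter.eventually_atTop.mp hav
    refine ⟨max ω₁ 1, le_max_right _ _, fun ω hω x hx t ht => ?_⟩
    have hω1 : 1 ≤ ω := (le_max_right _ _).trans hω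
    have hav' := hω₁ ω ((le_max_left _ _).trans hω)
    have hrc1 : ContinuousOn (fun s => r1 s (ω * s)) (Icc 0 T) :=
      hr1c.comp (f := fun s => (s, ω * s)) (by fun_prop)
        (fun s hs => ⟨hs, mul_nonneg (by linarith) hs.1⟩)
    have q1 := approx T hT f (fun t => r0 t + r1 t (ω * t)) (R0 + M) (tail N) (by positivity) (htail0 N)
      (hr0.add hrc1) (fun t ht => (abs_add_le _ _).trans (add_le_add (hR0 t ht)
        (hM t ht _ (mul_nonneg (by linarith) ht.1)))) (fun n => fn (n + 1)) N
      (fun x hx => tail_bound _ _ _ (hfour x hx) hsum (fun n => by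
        rw [abs_mul]
        have h1 := abs_sin_le_one (((n:ℝ) + 1) * x)
        nlinarith [abs_nonneg (fn (n+1))]) N) (u ω) (hu ω hω1) x hx t ht
    have q2 := tail_bound _ _ _ (hS x t ht).hasSum hsumb (hb x t ht) N
    rw [← hu0', tsum_mul_right] at q2
    have hadd : ∀ l, duh l (fun t => r0 t + r1 t (ω * t)) t = duh l r0 t + duh l (fun s => r1 s (ω * s)) t := by
      intro l
      have hsub : Icc 0 t ⊆ Icc 0 T := Icc_subset_Icc_right ht.2
      unfold duh
      rw [← intervalIntegral.integral_add]
      · congr 1; ext s; ring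
      · exact (ContinuousOn.mul (by fun_prop) (hr0.mono hsub)).intervalIntegrable_of_Icc ht.1
      · exact (ContinuousOn.mul (by fun_prop) (hrc1.mono hsub)).intervalIntegrable_of_Icc ht.1
    have q3 : |∑ n ∈ Finset.range N, fn (n + 1) * sin (((n:ℝ) + 1) * x) * duh (((n:ℝ) + 1)^2) (fun t => r0 t + r1 t (ω * t)) t
        - ∑ n ∈ Finset.range N, fn (n + 1) * sin (((n:ℝ) + 1) * x) * duh (((n:ℝ) + 1)^2) r0 t| ≤ ε / 2 := by
      rw [← Finset.sum_sub_distrib]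
      have h1 : ∀ n ∈ Finset.range N, |fn (n + 1) * sin (((n:ℝ) + 1) * x) * duh (((n:ℝ) + 1)^2) (fun t => r0 t + r1 t (ω * t)) t
        - fn (n + 1) * sin (((n:ℝ) + 1) * x) * duh (((n:ℝ) + 1)^2) r0 t| ≤ |fn (n + 1)| * (ε / 2 / (A + 1)) := by
        intro n hn
        rw [← mul_sub, hadd, add_sub_cancel_left, abs_mul, abs_mul]
        have h1 := abs_sin_le_one (((n:ℝ) + 1) * x)
        refine mul_le_mul ?_ (hav' n hn t ht) (abs_nonneg _) (abs_nonneg _)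
        nlinarith [abs_nonneg (fn (n+1))]
      refine (Finset.abs_sum_le_sum_abs _ _).trans ((Finset.sum_le_sum h1).trans ?_)
      rw [← Finset.sum_mul]
      have h2 : ∑ n ∈ Finset.range N, |fn (n + 1)| ≤ A := hsum.sum_le_tsum _ (fun _ _ => abs_nonneg _)
      rw [← mul_div_assoc, div_le_iff₀ (by positivity)]
      nlinarith
    have q4 : |u ω x t - u0 x t| ≤ tail N * (R0 + M) * T + ε / 2 + tail N * (T * R0) := by
      have q2' : |u0 x t - ∑ n ∈ Finset.range N, fn (n + 1) * sin (((n:ℝ) + 1) * x) * duh (((n:ℝ) + 1)^2) r0 t| ≤ tail N * (T * R0) := q2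
      rw [abs_le] at *
      constructor <;> linarith [q1.1, q1.2, q2'.1, q2'.2, q3.1, q3.2]
    have := htail0 N
    refine q4.trans ?_
    rw [hK] at hNK
    linarith
end
end

section
/- Suppose additionally that Λ_n ≠ 0 for every n ≥ 1 (i.e. M₀ = ∅). Then Problem 2 has exactly one solution, namely f(x) = Σ_{n≥1} (ψ_n/Λ_n) sin(nx); this series converges to a function of class C¹([0,π]) vanishing at 0 and π. Conversely, if M₀ ≠ ∅ then Problem 2 does not have a unique solution. -/
open Real Set

noncomputable section

/-- `f` is of class `C¹` on `[0,π]`. -/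
def IsC1 (f : ℝ → ℝ) : Prop :=
  ∃ f' : ℝ → ℝ, ContinuousOn f' (Icc 0 π) ∧
    ∀ x ∈ Icc (0:ℝ) π, HasDerivWithinAt f (f' x) (Icc 0 π) x

/-- `f` solves Problem 2: `f ∈ C¹([0,π])`, `f(0) = f(π) = 0`, and for any family of
classical solutions `u_ω` of the problem with source `f(x) r(t,ωt)` one has
`‖u_ω(·,t₀) − ψ‖_{C([0,π])} → 0` as `ω → ∞`. -/
def SolvesProblem2 (T t₀ : ℝ) (r0 : ℝ → ℝ) (r1 : ℝ → ℝ → ℝ) (ψ : ℝ → ℝ)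
    (f : ℝ → ℝ) : Prop :=
  IsC1 f ∧ f 0 = 0 ∧ f π = 0 ∧
  ∀ u : ℝ → ℝ → ℝ → ℝ,
    (∀ ω : ℝ, 1 ≤ ω →
      IsClassicalSolution T (fun x t => f x * (r0 t + r1 t (ω * t))) (u ω)) →
    ∀ ε > 0, ∃ ω₀ ≥ (1:ℝ), ∀ ω ≥ ω₀, ∀ x ∈ Icc (0:ℝ) π, |u ω x t₀ - ψ x| ≤ ε

/-! ### Fourier sine series -/

lemma ii_of_contOn {h : ℝ → ℝ} (hh : ContinuousOn h (Icc 0 π)) :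
    IntervalIntegrable h MeasureTheory.volume 0 π :=
  ContinuousOn.intervalIntegrable (by rwa [uIcc_of_le pi_pos.le])

lemma int_cos_int (k : ℤ) : ∫ x in (0:ℝ)..π, cos ((k:ℝ) * x) = if k = 0 then π else 0 := by
  split_ifs with h
  · simp [h]
  · have : (k:ℝ) ≠ 0 := by exact_mod_cast h
    rw [intervalIntegral.integral_comp_mul_left (fun x => cos x) this, integral_cos]
    simp [Real.sin_int_mul_pi]

lemma orth_sin (n m : ℕ) : ∫ x in (0:ℝ)..π, sin (((n:ℝ)+1) * x) * sin (((m:ℝ)+1) * x) =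
    if n = m then π / 2 else 0 := by
  have h1 : ∀ x : ℝ, sin (((n:ℝ)+1) * x) * sin (((m:ℝ)+1) * x) =
      (1/2) * (cos ((((n:ℤ) - (m:ℤ) : ℤ) : ℝ) * x) - cos ((((n:ℤ) + (m:ℤ) + 2 : ℤ) : ℝ) * x)) := by
    intro x
    push_cast
    rw [show ((n:ℝ) - m) * x = ((n:ℝ)+1) * x - ((m:ℝ)+1) * x by ring,
      show ((n:ℝ) + m + 2) * x = ((n:ℝ)+1) * x + ((m:ℝ)+1) * x by ring, cos_sub, cos_add]
    ring
  simp_rw [h1]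
  rw [intervalIntegral.integral_const_mul, intervalIntegral.integral_sub
    (Continuous.intervalIntegrable (by fun_prop) _ _)
    (Continuous.intervalIntegrable (by fun_prop) _ _), int_cos_int, int_cos_int]
  have h2 : ¬ ((n:ℤ) + m + 2 = 0) := by omega
  rw [if_neg h2]
  by_cases h : n = m
  · rw [if_pos h, if_pos (by omega)]; ring
  · rw [if_neg h, if_neg (by omega)]; ring

lemma orth_cos (n m : ℕ) : ∫ x in (0:ℝ)..π, cos (((n:ℝ)+1) * x) * cos (((m:ℝ)+1) * x) =
    if n = m then π / 2 else 0 := by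
  have h1 : ∀ x : ℝ, cos (((n:ℝ)+1) * x) * cos (((m:ℝ)+1) * x) =
      (1/2) * (cos ((((n:ℤ) - (m:ℤ) : ℤ) : ℝ) * x) + cos ((((n:ℤ) + (m:ℤ) + 2 : ℤ) : ℝ) * x)) := by
    intro x
    push_cast
    rw [show ((n:ℝ) - m) * x = ((n:ℝ)+1) * x - ((m:ℝ)+1) * x by ring,
      show ((n:ℝ) + m + 2) * x = ((n:ℝ)+1) * x + ((m:ℝ)+1) * x by ring, cos_sub, cos_add]
    ring
  simp_rw [h1]
  rw [intervalIntegral.integral_const_mul, intervalIntegral.integral_add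
    (Continuous.intervalIntegrable (by fun_prop) _ _)
    (Continuous.intervalIntegrable (by fun_prop) _ _), int_cos_int, int_cos_int]
  have h2 : ¬ ((n:ℤ) + m + 2 = 0) := by omega
  rw [if_neg h2]
  by_cases h : n = m
  · rw [if_pos h, if_pos (by omega)]; ring
  · rw [if_neg h, if_neg (by omega)]; ring

lemma bessel_summable (φ : ℕ → ℝ → ℝ) (hφ : ∀ n, Continuous (φ n))
    (ho : ∀ n m, ∫ x in (0:ℝ)..π, φ n x * φ m x = if n = m then π / 2 else 0)
    (h : ℝ → ℝ) (hh : ContinuousOn h (Icc 0 π)) :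
    Summable fun n => (∫ x in (0:ℝ)..π, h x * φ n x) ^ 2 := by
  apply summable_of_sum_range_le (c := (π / 2) * ∫ x in (0:ℝ)..π, h x ^ 2) (fun n => sq_nonneg _)
  intro N
  set c : ℕ → ℝ := fun n => ∫ x in (0:ℝ)..π, h x * φ n x with hc
  have hS : Continuous fun x => ∑ i ∈ Finset.range N, (2 / π) * c i * φ i x := by fun_prop
  have h0 : 0 ≤ ∫ x in (0:ℝ)..π, (h x - ∑ i ∈ Finset.range N, (2 / π) * c i * φ i x) ^ 2 :=
    intervalIntegral.integral_nonneg pi_pos.le fun x _ => sq_nonneg _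
  have h1 : ∫ x in (0:ℝ)..π, (h x - ∑ i ∈ Finset.range N, (2 / π) * c i * φ i x) ^ 2 =
      (∫ x in (0:ℝ)..π, h x ^ 2)
      - 2 * (∫ x in (0:ℝ)..π, ∑ i ∈ Finset.range N, (2 / π) * c i * (h x * φ i x))
      + ∫ x in (0:ℝ)..π, ∑ i ∈ Finset.range N, ∑ j ∈ Finset.range N,
          ((2 / π) * c i) * ((2 / π) * c j) * (φ i x * φ j x) := by
    rw [← intervalIntegral.integral_const_mul, ← intervalIntegral.integral_sub,
      ← intervalIntegral.integral_add]
    · congr 1; ext x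
      have e1 : ∑ i ∈ Finset.range N, (2 / π) * c i * (h x * φ i x) =
          h x * ∑ i ∈ Finset.range N, (2 / π) * c i * φ i x := by
        rw [Finset.mul_sum]; exact Finset.sum_congr rfl fun i _ => by ring
      have e2 : ∑ i ∈ Finset.range N, ∑ j ∈ Finset.range N,
          ((2 / π) * c i) * ((2 / π) * c j) * (φ i x * φ j x) =
          (∑ i ∈ Finset.range N, (2 / π) * c i * φ i x) ^ 2 := by
        rw [sq, Finset.sum_mul_sum]
        exact Finset.sum_congr rfl fun i _ => Finset.sum_congr rfl fun j _ => by ring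
      rw [e1, e2]; ring
    · exact ii_of_contOn (by fun_prop)
    · exact ii_of_contOn (by fun_prop)
    · exact ii_of_contOn (by fun_prop)
    · exact ii_of_contOn (by fun_prop)
  have h2 : ∫ x in (0:ℝ)..π, ∑ i ∈ Finset.range N, (2 / π) * c i * (h x * φ i x) =
      (2 / π) * ∑ i ∈ Finset.range N, c i ^ 2 := by
    rw [intervalIntegral.integral_finsetSum fun i _ => ii_of_contOn (by fun_prop), Finset.mul_sum]
    refine Finset.sum_congr rfl fun i _ => ?_
    rw [intervalIntegral.integral_const_mul]
    change _ * c i = _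
    ring
  have h3 : ∫ x in (0:ℝ)..π, ∑ i ∈ Finset.range N, ∑ j ∈ Finset.range N,
          ((2 / π) * c i) * ((2 / π) * c j) * (φ i x * φ j x) =
      (2 / π) * ∑ i ∈ Finset.range N, c i ^ 2 := by
    rw [intervalIntegral.integral_finsetSum fun i _ => ii_of_contOn (by fun_prop), Finset.mul_sum]
    refine Finset.sum_congr rfl fun i hi => ?_
    rw [intervalIntegral.integral_finsetSum fun i _ => ii_of_contOn (by fun_prop)]
    simp_rw [intervalIntegral.integral_const_mul, ho]
    simp only [mul_ite, mul_zero, Finset.sum_ite_eq, if_pos hi]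
    have := pi_pos.ne'
    field_simp
  rw [h1, h2, h3] at h0
  have hp := pi_pos
  have : (2 / π) * ∑ i ∈ Finset.range N, c i ^ 2 ≤ ∫ x in (0:ℝ)..π, h x ^ 2 := by linarith
  calc ∑ i ∈ Finset.range N, c i ^ 2 = (π / 2) * ((2 / π) * ∑ i ∈ Finset.range N, c i ^ 2) := by
        field_simp
    _ ≤ _ := by gcongr

lemma summable_inv_sq : Summable fun n : ℕ => (1 / ((n:ℝ) + 1)) ^ 2 := by
  have := (summable_nat_add_iff (f := fun n : ℕ => 1 / (n:ℝ) ^ 2) 1).2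
    (Real.summable_one_div_nat_pow.2 (by norm_num))
  simpa [div_pow] using this

lemma summable_div_of_sq {c : ℕ → ℝ} (hc : Summable fun n => c n ^ 2) :
    Summable fun n : ℕ => |c n| / ((n:ℝ) + 1) := by
  refine Summable.of_nonneg_of_le (fun n => by positivity) (fun n => ?_)
    (hc.add summable_inv_sq)
  have := sq_nonneg (|c n| - 1 / ((n:ℝ)+1))
  have h2 : |c n| / ((n:ℝ) + 1) = |c n| * (1 / ((n:ℝ)+1)) := by ring
  rw [h2, ← sq_abs (c n)]
  nlinarith [sq_nonneg (|c n|), sq_nonneg (1 / ((n:ℝ)+1))]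

/-- integration by parts: sine -/
lemma ibp_sin {h h' : ℝ → ℝ} (hc : ContinuousOn h' (Icc 0 π))
    (hd : ∀ x ∈ Icc (0:ℝ) π, HasDerivWithinAt h (h' x) (Icc 0 π) x)
    (h0 : h 0 = 0) (hπ : h π = 0) (n : ℕ) :
    ∫ x in (0:ℝ)..π, h x * sin (((n:ℝ)+1) * x) =
      (∫ x in (0:ℝ)..π, h' x * cos (((n:ℝ)+1) * x)) / ((n:ℝ)+1) := by
  have hn : ((n:ℝ)+1) ≠ 0 := by positivity
  have := intervalIntegral.integral_mul_deriv_eq_deriv_mul_of_hasDeriv_right (a := 0) (b := π)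
    (u := h) (u' := h') (v := fun x => - cos (((n:ℝ)+1) * x) / ((n:ℝ)+1))
    (v' := fun x => sin (((n:ℝ)+1) * x))
    (by rw [uIcc_of_le pi_pos.le]; exact fun x hx => (hd x hx).continuousWithinAt)
    (by fun_prop)
    (by
      rw [min_eq_left pi_pos.le, max_eq_right pi_pos.le]
      intro x hx
      exact ((hd x ⟨hx.1.le, hx.2.le⟩).hasDerivAt (Icc_mem_nhds hx.1 hx.2)).hasDerivWithinAt)
    (by
      intro x hx
      have h1 : HasDerivAt (fun x => ((n:ℝ)+1) * x) ((n:ℝ)+1) x := by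
        simpa using (hasDerivAt_id x).const_mul ((n:ℝ)+1)
      have h2 := (h1.cos.neg).div_const ((n:ℝ)+1)
      exact (h2.congr_deriv (by field_simp)).hasDerivWithinAt)
    (ii_of_contOn hc) (Continuous.intervalIntegrable (by fun_prop) _ _)
  rw [this, h0, hπ, ← intervalIntegral.integral_div]
  simp only [zero_mul, sub_zero, zero_sub, ← intervalIntegral.integral_neg]
  congr 1; ext x; ring

/-- integration by parts: cosine -/
lemma ibp_cos {h h' : ℝ → ℝ} (hc : ContinuousOn h' (Icc 0 π))
    (hd : ∀ x ∈ Icc (0:ℝ) π, HasDerivWithinAt h (h' x) (Icc 0 π) x) (n : ℕ) :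
    ∫ x in (0:ℝ)..π, h x * cos (((n:ℝ)+1) * x) =
      -(∫ x in (0:ℝ)..π, h' x * sin (((n:ℝ)+1) * x)) / ((n:ℝ)+1) := by
  have hn : ((n:ℝ)+1) ≠ 0 := by positivity
  have := intervalIntegral.integral_mul_deriv_eq_deriv_mul_of_hasDeriv_right (a := 0) (b := π)
    (u := h) (u' := h') (v := fun x => sin (((n:ℝ)+1) * x) / ((n:ℝ)+1))
    (v' := fun x => cos (((n:ℝ)+1) * x))
    (by rw [uIcc_of_le pi_pos.le]; exact fun x hx => (hd x hx).continuousWithinAt)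
    (by fun_prop)
    (by
      rw [min_eq_left pi_pos.le, max_eq_right pi_pos.le]
      intro x hx
      exact ((hd x ⟨hx.1.le, hx.2.le⟩).hasDerivAt (Icc_mem_nhds hx.1 hx.2)).hasDerivWithinAt)
    (by
      intro x hx
      have h1 : HasDerivAt (fun x => ((n:ℝ)+1) * x) ((n:ℝ)+1) x := by
        simpa using (hasDerivAt_id x).const_mul ((n:ℝ)+1)
      have h2 := (h1.sin).div_const ((n:ℝ)+1)
      exact (h2.congr_deriv (by field_simp)).hasDerivWithinAt)
    (ii_of_contOn hc) (Continuous.intervalIntegrable (by fun_prop) _ _)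
  have hs : sin (((n:ℝ)+1) * π) = 0 := by
    have := Real.sin_nat_mul_pi (n+1); push_cast at this; exact this
  rw [this, ← intervalIntegral.integral_neg, ← intervalIntegral.integral_div]
  simp only [hs, mul_zero, sin_zero, zero_div, zero_sub, sub_zero,
    ← intervalIntegral.integral_neg]
  congr 1; ext x; ring

/-- completeness of the sine system -/
lemma sin_complete {h : ℝ → ℝ} (hh : ContinuousOn h (Icc 0 π))
    (hz : ∀ n : ℕ, ∫ x in (0:ℝ)..π, h x * sin (((n:ℝ)+1) * x) = 0) :
    ∀ x ∈ Icc (0:ℝ) π, h x = 0 := by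
  have hint : ∀ w : ℝ → ℝ, Continuous w → IntervalIntegrable (fun x => h x * w x)
      MeasureTheory.volume 0 π := fun w hw => ii_of_contOn (by fun_prop)
  have key : ∀ k n : ℕ, ∫ x in (0:ℝ)..π, h x * (sin ((n:ℝ) * x) * cos x ^ k) = 0 := by
    intro k
    induction k with
    | zero =>
      intro n
      cases n with
      | zero => simp
      | succ n => simpa using hz n
    | succ k ih =>
      intro n
      cases n with
      | zero => simp
      | succ n =>
        have : ∀ x : ℝ, h x * (sin (((n+1:ℕ):ℝ) * x) * cos x ^ (k+1)) =
            (1/2) * (h x * (sin (((n+2:ℕ):ℝ) * x) * cos x ^ k) + h x * (sin ((n:ℝ) * x) * cos x ^ k)) := by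
          intro x
          push_cast
          rw [show ((n:ℝ) + 2) * x = ((n:ℝ)+1) * x + x by ring,
            show (n:ℝ) * x = ((n:ℝ)+1) * x - x by ring, sin_add, sin_sub]
          ring
        simp_rw [this]
        rw [intervalIntegral.integral_const_mul, intervalIntegral.integral_add
          (hint _ (by fun_prop)) (hint _ (by fun_prop)), ih, ih]
        simp
  have keyp : ∀ p : Polynomial ℝ, ∫ x in (0:ℝ)..π, h x * (sin x * p.eval (cos x)) = 0 := by
    intro p
    induction p using Polynomial.induction_on' with
    | add p q hp hq =>
      simp_rw [Polynomial.eval_add, mul_add]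
      rw [intervalIntegral.integral_add (hint _ ?_) (hint _ ?_), hp, hq, add_zero]
      · exact continuous_sin.mul (p.continuous.comp continuous_cos)
      · exact continuous_sin.mul (q.continuous.comp continuous_cos)
    | monomial k a =>
      have : ∀ x : ℝ, h x * (sin x * (Polynomial.monomial k a).eval (cos x)) =
          a * (h x * (sin (((1:ℕ):ℝ) * x) * cos x ^ k)) := by
        intro x; rw [Polynomial.eval_monomial]; simp; ring
      simp_rw [this]
      rw [intervalIntegral.integral_const_mul, key, mul_zero]
  -- the integral of h² sin vanishes
  have hsq : ContinuousOn (fun x => h x ^ 2 * sin x) (Icc 0 π) := by fun_prop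
  have hI : ∫ x in (0:ℝ)..π, h x ^ 2 * sin x ≤ 0 := by
    obtain ⟨M, hM⟩ := isCompact_Icc.exists_bound_of_continuousOn hh
    have hM0 : 0 ≤ M := (norm_nonneg _).trans (hM 0 ⟨le_rfl, pi_pos.le⟩)
    refine le_of_forall_pos_le_add fun ε hε => ?_
    have hδ : 0 < ε / (π * (M + 1)) := by have := pi_pos; positivity
    have hcomp : ContinuousOn (fun y => h (arccos y)) (Icc (-1) 1) :=
      hh.comp continuous_arccos.continuousOn fun y _ => ⟨arccos_nonneg y, arccos_le_pi y⟩
    obtain ⟨p, hp⟩ := exists_polynomial_near_of_continuousOn (-1) 1 _ hcomp _ hδ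
    have e : ∫ x in (0:ℝ)..π, h x ^ 2 * sin x =
        ∫ x in (0:ℝ)..π, (h x ^ 2 * sin x - h x * (sin x * p.eval (cos x))) := by
      rw [intervalIntegral.integral_sub (ii_of_contOn hsq) (hint _ ?_), keyp, sub_zero]
      exact continuous_sin.mul (p.continuous.comp continuous_cos)
    have b := intervalIntegral.norm_integral_le_of_norm_le_const (a := 0) (b := π)
      (f := fun x => h x ^ 2 * sin x - h x * (sin x * p.eval (cos x)))
      (C := M * (ε / (π * (M + 1)))) (by
        intro x hx
        rw [uIoc_of_le pi_pos.le] at hx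
        have hx' : x ∈ Icc 0 π := ⟨hx.1.le, hx.2⟩
        have h1 := hp (cos x) ⟨neg_one_le_cos x, cos_le_one x⟩
        rw [arccos_cos hx'.1 hx'.2] at h1
        have : h x ^ 2 * sin x - h x * (sin x * p.eval (cos x)) =
          h x * (-(p.eval (cos x) - h x)) * sin x := by ring
        rw [this, norm_mul, norm_mul, norm_neg]
        have hs : ‖sin x‖ ≤ 1 := abs_sin_le_one x
        have hm := hM x hx'
        have h3 : ‖p.eval (cos x) - h x‖ ≤ ε / (π * (M + 1)) := h1.le
        calc _ ≤ M * (ε / (π * (M + 1))) * 1 := by gcongr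
          _ = _ := mul_one _)
    rw [e, zero_add]
    refine (le_abs_self _).trans (b.trans ?_)
    have hp := pi_pos
    rw [sub_zero, abs_of_pos pi_pos]
    have : M * (ε / (π * (M + 1))) * π = ε * (M / (M+1)) := by field_simp
    rw [this]
    have : M / (M+1) ≤ 1 := by rw [div_le_one (by linarith)]; linarith
    nlinarith
  have hIoo : ∀ x ∈ Ioo (0:ℝ) π, h x = 0 := by
    intro x hx
    by_contra hne
    have := intervalIntegral.integral_pos pi_pos hsq
      (fun y hy => mul_nonneg (sq_nonneg _) (sin_nonneg_of_nonneg_of_le_pi hy.1.le hy.2))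
      ⟨x, ⟨hx.1.le, hx.2.le⟩, mul_pos (by positivity) (sin_pos_of_pos_of_lt_pi hx.1 hx.2)⟩
    linarith
  have hcl : EqOn h (fun _ => 0) (closure (Ioo 0 π)) := by
    refine EqOn.of_subset_closure (s := Ioo 0 π) (fun x hx => hIoo x hx) ?_ continuousOn_const
      subset_closure le_rfl
    rwa [closure_Ioo pi_pos.ne]
  rw [closure_Ioo pi_pos.ne] at hcl
  exact hcl

lemma sinser_summable {a : ℕ → ℝ} (ha : Summable fun n => |a n|) (x : ℝ) :
    Summable fun n : ℕ => a n * sin (((n:ℝ)+1) * x) := by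
  refine Summable.of_norm_bounded ha fun n => ?_
  rw [norm_mul]
  exact mul_le_of_le_one_right (abs_nonneg _) (abs_sin_le_one _)

lemma sinser_continuous {a : ℕ → ℝ} (ha : Summable fun n => |a n|) :
    Continuous fun x : ℝ => ∑' n : ℕ, a n * sin (((n:ℝ)+1) * x) := by
  refine continuous_tsum (fun n => by fun_prop) ha fun n x => ?_
  rw [norm_mul]
  exact mul_le_of_le_one_right (abs_nonneg _) (abs_sin_le_one _)

lemma sinser_coeff {a : ℕ → ℝ} (ha : Summable fun n => |a n|) (m : ℕ) :
    ∫ x in (0:ℝ)..π, (∑' n : ℕ, a n * sin (((n:ℝ)+1) * x)) * sin (((m:ℝ)+1) * x) =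
      (π / 2) * a m := by
  have := intervalIntegral.hasSum_integral_of_dominated_convergence (a := 0) (b := π)
    (μ := MeasureTheory.volume)
    (F := fun (n : ℕ) x => a n * sin (((n:ℝ)+1) * x) * sin (((m:ℝ)+1) * x))
    (f := fun x => (∑' n : ℕ, a n * sin (((n:ℝ)+1) * x)) * sin (((m:ℝ)+1) * x))
    (fun n _ => |a n|)
    (fun n => (Continuous.aestronglyMeasurable (by fun_prop)))
    (fun n => Filter.Eventually.of_forall fun x _ => by
      rw [norm_mul, norm_mul, mul_assoc]
      exact mul_le_of_le_one_right (abs_nonneg _)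
        (mul_le_one₀ (abs_sin_le_one _) (abs_nonneg _) (abs_sin_le_one _)))
    (Filter.Eventually.of_forall fun x _ => ha)
    (Continuous.intervalIntegrable continuous_const _ _)
    (Filter.Eventually.of_forall fun x _ => (sinser_summable ha x).hasSum.mul_right _)
  rw [← this.tsum_eq]
  simp_rw [mul_assoc, intervalIntegral.integral_const_mul, orth_sin]
  rw [tsum_eq_single m]
  · simp; ring
  · intro n hn; simp [hn]

lemma c1_coeff_summable {f : ℝ → ℝ} (hf : IsC1 f) (h0 : f 0 = 0) (hπ : f π = 0) :
    Summable fun n : ℕ => |(2 / π) * ∫ x in (0:ℝ)..π, f x * sin (((n:ℝ)+1) * x)| := by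
  obtain ⟨f', hc, hd⟩ := hf
  have hb := summable_div_of_sq
    (bessel_summable (fun n x => cos (((n:ℝ)+1) * x)) (fun n => by fun_prop) orth_cos f' hc)
  refine (hb.mul_left (2 / π)).congr fun n => ?_
  rw [ibp_sin hc hd h0 hπ, abs_mul, abs_div (∫ x in (0:ℝ)..π, _), abs_of_pos (div_pos two_pos pi_pos),
    abs_of_pos (show (0:ℝ) < (n:ℝ)+1 by positivity)]

lemma c1_sinser {f : ℝ → ℝ} (hf : IsC1 f) (h0 : f 0 = 0) (hπ : f π = 0) :
    ∀ x ∈ Icc (0:ℝ) π, f x = ∑' n : ℕ,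
      ((2 / π) * ∫ x in (0:ℝ)..π, f x * sin (((n:ℝ)+1) * x)) * sin (((n:ℝ)+1) * x) := by
  have ha := c1_coeff_summable hf h0 hπ
  have hfc : ContinuousOn f (Icc 0 π) := by
    obtain ⟨f', hc, hd⟩ := hf
    exact fun x hx => (hd x hx).continuousWithinAt
  have hS := sinser_continuous ha
  have hSi : ∀ m : ℕ, IntervalIntegrable (fun x => (∑' n : ℕ,
      ((2 / π) * ∫ x in (0:ℝ)..π, f x * sin (((n:ℝ)+1) * x)) * sin (((n:ℝ)+1) * x)) *
        sin (((m:ℝ)+1) * x)) MeasureTheory.volume 0 π := fun m =>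
    (hS.mul (by fun_prop : Continuous fun x => sin (((m:ℝ)+1) * x))).intervalIntegrable _ _
  have := sin_complete (h := fun x => f x - ∑' n : ℕ,
      ((2 / π) * ∫ x in (0:ℝ)..π, f x * sin (((n:ℝ)+1) * x)) * sin (((n:ℝ)+1) * x))
    (hfc.sub hS.continuousOn) (fun n => by
      simp_rw [sub_mul]
      rw [intervalIntegral.integral_sub (ii_of_contOn (by fun_prop))
        (hSi n), sinser_coeff ha]
      have := pi_pos.ne'
      field_simp
      simp)
  intro x hx
  exact sub_eq_zero.1 (this x hx)

/-! ### The heat equation -/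

def qq (k : ℝ) (ρ : ℝ → ℝ) (t : ℝ) : ℝ := ∫ s in (0:ℝ)..t, exp (-k ^ 2 * (t - s)) * ρ s

lemma qq_eq (k : ℝ) (ρ : ℝ → ℝ) (t : ℝ) :
    qq k ρ t = exp (-k ^ 2 * t) * ∫ s in (0:ℝ)..t, exp (k ^ 2 * s) * ρ s := by
  rw [qq, ← intervalIntegral.integral_const_mul]
  congr 1; ext s
  rw [← mul_assoc, ← exp_add]; ring_nf

lemma qq_hasDerivAt (k : ℝ) {ρ : ℝ → ℝ} (hρ : Continuous ρ) (t : ℝ) :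
    HasDerivAt (qq k ρ) (ρ t - k ^ 2 * qq k ρ t) t := by
  have h1 : HasDerivAt (fun t => ∫ s in (0:ℝ)..t, exp (k ^ 2 * s) * ρ s)
      (exp (k ^ 2 * t) * ρ t) t :=
    ((by fun_prop : Continuous fun s => exp (k ^ 2 * s) * ρ s).integral_hasStrictDerivAt
      0 t).hasDerivAt
  have h2 : HasDerivAt (fun t => -k ^ 2 * t) (-k ^ 2) t := by
    simpa using (hasDerivAt_id t).const_mul (-k ^ 2)
  have h3 := h2.exp.mul h1
  have e : qq k ρ = (fun t => exp (-k ^ 2 * t)) * fun t => ∫ s in (0:ℝ)..t, exp (k ^ 2 * s) * ρ s := by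
    ext t; exact qq_eq k ρ t
  rw [e]
  refine h3.congr_deriv ?_
  have e2 : exp (-k ^ 2 * t) * exp (k ^ 2 * t) = 1 := by rw [← exp_add]; simp
  simp only [Pi.mul_apply]
  rw [← mul_assoc, e2]; ring

lemma qq_continuous (k : ℝ) {ρ : ℝ → ℝ} (hρ : Continuous ρ) : Continuous (qq k ρ) :=
  continuous_iff_continuousAt.2 fun t => (qq_hasDerivAt k hρ t).continuousAt

lemma int_exp_k {k : ℝ} (hk : 0 < k) (t : ℝ) :
    ∫ s in (0:ℝ)..t, exp (-k ^ 2 * (t - s)) = (1 - exp (-k ^ 2 * t)) / k ^ 2 := by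
  rw [intervalIntegral.integral_eq_sub_of_hasDerivAt
    (f := fun s => exp (-k ^ 2 * (t - s)) / k ^ 2)]
  · simp; ring
  · intro s _
    have h2 : HasDerivAt (fun s => -k ^ 2 * (t - s)) (k ^ 2) s := by
      simpa using ((hasDerivAt_id s).const_sub t).const_mul (-k ^ 2)
    exact (h2.exp.div_const (k ^ 2)).congr_deriv (by field_simp)
  · exact Continuous.intervalIntegrable (by fun_prop) _ _

lemma qq_bound {k : ℝ} (hk : 0 < k) {ρ : ℝ → ℝ} {M t : ℝ} (ht : 0 ≤ t)
    (hM0 : 0 ≤ M) (hM : ∀ s ∈ Icc 0 t, |ρ s| ≤ M) : |qq k ρ t| ≤ M / k ^ 2 := by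
  have h := intervalIntegral.norm_integral_le_of_norm_le (a := 0) (b := t)
    (μ := MeasureTheory.volume)
    (f := fun s => exp (-k ^ 2 * (t - s)) * ρ s) (g := fun s => exp (-k ^ 2 * (t - s)) * M) ht
    (Filter.Eventually.of_forall fun s hs => by
      rw [norm_mul, norm_of_nonneg (exp_pos _).le]
      have := hM s ⟨hs.1.le, hs.2⟩
      gcongr
      exact this)
    (Continuous.intervalIntegrable (by fun_prop) _ _)
  rw [intervalIntegral.integral_mul_const, int_exp_k hk] at h
  refine h.trans ?_
  rw [div_mul_eq_mul_div]
  gcongr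
  have := exp_pos (-k ^ 2 * t)
  nlinarith

lemma qq_bound' {k : ℝ} (hk : 1 ≤ k) {ρ : ℝ → ℝ} {M t : ℝ} (ht : 0 ≤ t)
    (hM0 : 0 ≤ M) (hM : ∀ s ∈ Icc 0 t, |ρ s| ≤ M) :
    |qq k ρ t| ≤ M ∧ k * |qq k ρ t| ≤ M ∧ k ^ 2 * |qq k ρ t| ≤ M := by
  have h := qq_bound (by linarith : 0 < k) ht hM0 hM
  have hk2 : 0 < k ^ 2 := by positivity
  rw [le_div_iff₀ hk2] at h
  have := abs_nonneg (qq k ρ t)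
  refine ⟨?_, ?_, ?_⟩ <;> nlinarith [mul_nonneg this (sub_nonneg.2 hk)]

lemma exists_classical {T : ℝ} {a : ℕ → ℝ} (ha : Summable fun n => |a n|)
    {ρ : ℝ → ℝ} (hρ : Continuous ρ) {F : ℝ → ℝ → ℝ}
    (hF : ∀ x ∈ Ioo (0:ℝ) π, ∀ t ∈ Ioo (0:ℝ) T,
      F x t = (∑' n : ℕ, a n * sin (((n:ℝ)+1) * x)) * ρ t) :
    IsClassicalSolution T F
      (fun x t => ∑' n : ℕ, a n * sin (((n:ℝ)+1) * x) * qq ((n:ℝ)+1) ρ t) := by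
  obtain ⟨M, hM⟩ := isCompact_Icc.exists_bound_of_continuousOn (s := Icc 0 T) hρ.continuousOn
  have hM' : ∀ s ∈ Icc 0 T, |ρ s| ≤ |M| := fun s hs => (hM s hs).trans (le_abs_self M)
  have hq : ∀ n : ℕ, ∀ t ∈ Icc 0 T, |qq ((n:ℝ)+1) ρ t| ≤ |M| ∧
      ((n:ℝ)+1) * |qq ((n:ℝ)+1) ρ t| ≤ |M| ∧ ((n:ℝ)+1) ^ 2 * |qq ((n:ℝ)+1) ρ t| ≤ |M| :=
    fun n t ht => qq_bound' (by linarith [n.cast_nonneg (α := ℝ)]) ht.1 (abs_nonneg M)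
      fun s hs => hM' s ⟨hs.1, hs.2.trans ht.2⟩
  have hqc : ∀ n : ℕ, Continuous (qq ((n:ℝ)+1) ρ) := fun n => qq_continuous _ hρ
  have hsM : Summable fun n => |a n| * |M| := ha.mul_right _
  have hsM2 : Summable fun n => |a n| * (|M| + |M|) := ha.mul_right _
  have hsub : ∀ {t}, t ∈ Ioo 0 T → t ∈ Icc 0 T := fun h => ⟨h.1.le, h.2.le⟩
  -- bounds
  have b0 : ∀ n : ℕ, ∀ x : ℝ, ∀ t ∈ Icc 0 T,
      ‖a n * sin (((n:ℝ)+1) * x) * qq ((n:ℝ)+1) ρ t‖ ≤ |a n| * |M| := by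
    intro n x t ht
    rw [norm_mul, norm_mul, mul_assoc]
    refine mul_le_mul_of_nonneg_left ?_ (abs_nonneg _)
    calc _ ≤ 1 * |qq ((n:ℝ)+1) ρ t| := mul_le_mul_of_nonneg_right (abs_sin_le_one _) (abs_nonneg _)
      _ ≤ |M| := by rw [one_mul]; exact (hq n t ht).1
  have b1 : ∀ n : ℕ, ∀ x : ℝ, ∀ t ∈ Icc 0 T,
      ‖a n * (cos (((n:ℝ)+1) * x) * ((n:ℝ)+1)) * qq ((n:ℝ)+1) ρ t‖ ≤ |a n| * |M| := by
    intro n x t ht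
    rw [norm_mul, norm_mul, mul_assoc]
    refine mul_le_mul_of_nonneg_left ?_ (abs_nonneg _)
    rw [norm_mul, norm_of_nonneg (by positivity : (0:ℝ) ≤ (n:ℝ)+1), mul_assoc]
    calc _ ≤ 1 * (((n:ℝ)+1) * |qq ((n:ℝ)+1) ρ t|) :=
          mul_le_mul_of_nonneg_right (abs_cos_le_one _) (by positivity)
      _ ≤ |M| := by rw [one_mul]; exact (hq n t ht).2.1
  have b2 : ∀ n : ℕ, ∀ x : ℝ, ∀ t ∈ Icc 0 T,
      ‖a n * (-sin (((n:ℝ)+1) * x) * ((n:ℝ)+1) ^ 2) * qq ((n:ℝ)+1) ρ t‖ ≤ |a n| * |M| := by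
    intro n x t ht
    rw [norm_mul, norm_mul, mul_assoc]
    refine mul_le_mul_of_nonneg_left ?_ (abs_nonneg _)
    rw [norm_mul, norm_of_nonneg (by positivity : (0:ℝ) ≤ ((n:ℝ)+1)^2), norm_neg, mul_assoc]
    calc _ ≤ 1 * (((n:ℝ)+1)^2 * |qq ((n:ℝ)+1) ρ t|) :=
          mul_le_mul_of_nonneg_right (abs_sin_le_one _) (by positivity)
      _ ≤ |M| := by rw [one_mul]; exact (hq n t ht).2.2
  have b3 : ∀ n : ℕ, ∀ x : ℝ, ∀ t ∈ Icc 0 T,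
      ‖a n * sin (((n:ℝ)+1) * x) * (ρ t - ((n:ℝ)+1) ^ 2 * qq ((n:ℝ)+1) ρ t)‖
        ≤ |a n| * (|M| + |M|) := by
    intro n x t ht
    rw [norm_mul, norm_mul, mul_assoc]
    refine mul_le_mul_of_nonneg_left ?_ (abs_nonneg _)
    calc _ ≤ 1 * ‖ρ t - ((n:ℝ)+1) ^ 2 * qq ((n:ℝ)+1) ρ t‖ :=
          mul_le_mul_of_nonneg_right (abs_sin_le_one _) (norm_nonneg _)
      _ ≤ |M| + |M| := by
          rw [one_mul]
          refine (norm_sub_le _ _).trans (add_le_add (hM' t ht) ?_)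
          rw [norm_mul, norm_of_nonneg (by positivity : (0:ℝ) ≤ ((n:ℝ)+1)^2)]
          exact (hq n t ht).2.2
  refine ⟨?_, ?_, ?_, fun x t => ∑' n : ℕ, a n * sin (((n:ℝ)+1) * x) *
      (ρ t - ((n:ℝ)+1) ^ 2 * qq ((n:ℝ)+1) ρ t),
    fun x t => ∑' n : ℕ, a n * (cos (((n:ℝ)+1) * x) * ((n:ℝ)+1)) * qq ((n:ℝ)+1) ρ t,
    fun x t => ∑' n : ℕ, a n * (-sin (((n:ℝ)+1) * x) * ((n:ℝ)+1) ^ 2) * qq ((n:ℝ)+1) ρ t,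
    ?_, ?_, ?_⟩
  · refine continuousOn_tsum (fun n => Continuous.continuousOn ?_) hsM fun n p hp => b0 n _ _ hp.2
    have := hqc n
    fun_prop
  · intro x _
    simp [qq]
  · intro t _
    constructor
    · simp
    · have : ∀ n : ℕ, sin (((n:ℝ)+1) * π) = 0 := fun n => by
        have := Real.sin_nat_mul_pi (n+1); push_cast at this; exact this
      simp [this]
  · refine continuousOn_tsum (fun n => Continuous.continuousOn ?_) hsM2
      fun n p hp => b3 n _ _ (hsub hp.2)
    have := hqc n
    fun_prop
  · refine continuousOn_tsum (fun n => Continuous.continuousOn ?_) hsM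
      fun n p hp => b2 n _ _ (hsub hp.2)
    have := hqc n
    fun_prop
  · intro x hx t ht
    have ht' := hsub ht
    have hlin : ∀ (n : ℕ) (y : ℝ), HasDerivAt (fun x => ((n:ℝ)+1) * x) ((n:ℝ)+1) y := fun n y => by
      simpa using (hasDerivAt_id y).const_mul ((n:ℝ)+1)
    refine ⟨?_, ?_, ?_, ?_⟩
    · exact hasDerivAt_tsum_of_isPreconnected
        (g := fun (n : ℕ) t => a n * sin (((n:ℝ)+1) * x) * qq ((n:ℝ)+1) ρ t)
        (g' := fun (n : ℕ) t => a n * sin (((n:ℝ)+1) * x) *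
          (ρ t - ((n:ℝ)+1) ^ 2 * qq ((n:ℝ)+1) ρ t)) hsM2 isOpen_Ioo isPreconnected_Ioo
        (fun n y hy => (qq_hasDerivAt _ hρ y).const_mul _) (fun n y hy => b3 n x y (hsub hy)) ht
        (Summable.of_norm_bounded hsM fun n => b0 n x t ht') ht
    · exact hasDerivAt_tsum
        (g := fun (n : ℕ) x => a n * sin (((n:ℝ)+1) * x) * qq ((n:ℝ)+1) ρ t)
        (g' := fun (n : ℕ) x => a n * (cos (((n:ℝ)+1) * x) * ((n:ℝ)+1)) * qq ((n:ℝ)+1) ρ t)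
        hsM (fun n y => ((hlin n y).sin.const_mul _).mul_const _) (fun n y => b1 n y t ht')
        (y₀ := x) (Summable.of_norm_bounded hsM fun n => b0 n x t ht') x
    · exact hasDerivAt_tsum
        (g := fun (n : ℕ) x => a n * (cos (((n:ℝ)+1) * x) * ((n:ℝ)+1)) * qq ((n:ℝ)+1) ρ t)
        (g' := fun (n : ℕ) x => a n * (-sin (((n:ℝ)+1) * x) * ((n:ℝ)+1)^2) * qq ((n:ℝ)+1) ρ t)
        hsM (fun n y => ((((hlin n y).cos.mul_const ((n:ℝ)+1)).const_mul (a n)).mul_const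
          (qq ((n:ℝ)+1) ρ t)).congr_deriv (by ring)) (fun n y => b2 n y t ht')
        (y₀ := x) (Summable.of_norm_bounded hsM fun n => b1 n x t ht') x
    · rw [hF x hx t ht, ← tsum_mul_right, ← Summable.tsum_add]
      · exact tsum_congr fun n => by ring
      · exact Summable.of_norm_bounded hsM fun n => b2 n x t ht'
      · exact (sinser_summable ha x).mul_right _

lemma no_pos_second_deriv {g g1 : ℝ → ℝ} {x g2 : ℝ} (hmax : IsLocalMax g x)
    (h1 : ∀ᶠ y in nhds x, HasDerivAt g (g1 y) y) (h2 : HasDerivAt g1 g2 x) : g2 ≤ 0 := by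
  by_contra hpos
  push Not at hpos
  have e1 : deriv g =ᶠ[nhds x] g1 := h1.mono fun y hy => hy.deriv
  have e2 : deriv (deriv g) x = g2 := by rw [e1.deriv_eq]; exact h2.deriv
  have hmin := isLocalMin_of_deriv_deriv_pos (f := g) (x₀ := x) (by rw [e2]; exact hpos)
    hmax.deriv_eq_zero h1.self_of_nhds.continuousAt
  have hc : g =ᶠ[nhds x] fun _ => g x := by
    filter_upwards [hmax, hmin] with y h1 h2 using le_antisymm h1 h2
  have : deriv (deriv g) x = 0 := by
    rw [hc.deriv.deriv_eq]; simp
  linarith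

lemma left_deriv_nonneg {g : ℝ → ℝ} {g' t : ℝ} (h : HasDerivAt g g' t) (ht : 0 < t)
    (hmax : ∀ s ∈ Ioo 0 t, g s ≤ g t) : 0 ≤ g' := by
  have h1 : Filter.Tendsto (slope g t) (nhdsWithin t (Iio t)) (nhds g') :=
    (hasDerivWithinAt_iff_tendsto_slope' (by simp)).1 h.hasDerivWithinAt
  refine ge_of_tendsto h1 ?_
  filter_upwards [Ioo_mem_nhdsLT ht] with s hs
  rw [slope_def_field]
  exact div_nonneg_of_nonpos (sub_nonpos.2 (hmax s hs)) (sub_nonpos.2 hs.2.le)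

lemma max_principle {T : ℝ} {F : ℝ → ℝ → ℝ} {u v : ℝ → ℝ → ℝ}
    (hu : IsClassicalSolution T F u) (hv : IsClassicalSolution T F v) :
    ∀ x ∈ Icc (0:ℝ) π, ∀ t ∈ Ico (0:ℝ) T, u x t ≤ v x t := by
  obtain ⟨uc, u0, ub, ut, ux, uxx, -, -, hu⟩ := hu
  obtain ⟨vc, v0, vb, vt, vx, vxx, -, -, hv⟩ := hv
  intro x hx t ht
  refine le_of_forall_pos_le_add fun ε' hε' => ?_
  obtain ⟨ε, hε, hεt⟩ : ∃ ε > 0, ε * t ≤ ε' := by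
    refine ⟨ε' / (t + 1), div_pos hε' (by linarith [ht.1]), ?_⟩
    rw [div_mul_eq_mul_div, div_le_iff₀ (by linarith [ht.1])]
    nlinarith [ht.1]
  suffices h : u x t - v x t - ε * t ≤ 0 by linarith
  have hcomp : IsCompact (Icc (0:ℝ) π ×ˢ Icc 0 t) := isCompact_Icc.prod isCompact_Icc
  have hsub : Icc (0:ℝ) π ×ˢ Icc 0 t ⊆ Icc (0:ℝ) π ×ˢ Icc 0 T :=
    prod_mono le_rfl (Icc_subset_Icc le_rfl ht.2.le)
  obtain ⟨⟨y, s⟩, ⟨hy, hs⟩, hmax⟩ := hcomp.exists_isMaxOn ⟨(x, t), hx, ht.1, le_rfl⟩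
    (f := fun p : ℝ × ℝ => u p.1 p.2 - v p.1 p.2 - ε * p.2)
    (((uc.mono hsub).sub (vc.mono hsub)).sub (by fun_prop))
  simp only at hy hs
  have hm : ∀ x' ∈ Icc (0:ℝ) π, ∀ t' ∈ Icc 0 t,
      u x' t' - v x' t' - ε * t' ≤ u y s - v y s - ε * s := fun x' hx' t' ht' =>
    hmax (show (x', t') ∈ Icc (0:ℝ) π ×ˢ Icc 0 t from ⟨hx', ht'⟩)
  refine (hm x hx t ⟨ht.1, le_rfl⟩).trans ?_
  have hsT : s ∈ Icc 0 T := ⟨hs.1, hs.2.trans ht.2.le⟩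
  have hεs : 0 ≤ ε * s := mul_nonneg hε.le hs.1
  rcases eq_or_lt_of_le hs.1 with h0 | h0
  · rw [← h0, u0 y hy, v0 y hy]; simp
  rcases eq_or_lt_of_le hy.1 with h1 | h1
  · rw [← h1, (ub s hsT).1, (vb s hsT).1]; linarith
  rcases eq_or_lt_of_le hy.2 with h2 | h2
  · rw [h2, (ub s hsT).2, (vb s hsT).2]; linarith
  exfalso
  have hsT' : s ∈ Ioo 0 T := ⟨h0, hs.2.trans_lt ht.2⟩
  obtain ⟨ut1, -, ux2, ueq⟩ := hu y ⟨h1, h2⟩ s hsT'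
  obtain ⟨vt1, -, vx2, veq⟩ := hv y ⟨h1, h2⟩ s hsT'
  have k1 : uxx y s - vxx y s ≤ 0 := by
    refine no_pos_second_deriv (g := fun x' => u x' s - v x' s)
      (g1 := fun x' => ux x' s - vx x' s) (x := y) ?_ ?_ (ux2.sub vx2)
    · filter_upwards [Icc_mem_nhds h1 h2] with x' hx'
      have := hm x' hx' s hs
      linarith
    · filter_upwards [Ioo_mem_nhds h1 h2] with x' hx'
      exact (hu x' hx' s hsT').2.1.sub (hv x' hx' s hsT').2.1
  have hlin : HasDerivAt (fun t => ε * t) ε s := by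
    simpa using (hasDerivAt_id s).const_mul ε
  have k2 : 0 ≤ ut y s - vt y s - ε := by
    refine left_deriv_nonneg (g := fun t' => u y t' - v y t' - ε * t') ((ut1.sub vt1).sub hlin) h0 ?_
    intro s' hs'
    exact hm y hy s' ⟨hs'.1.le, hs'.2.le.trans hs.2⟩
  linarith

lemma classical_unique {T : ℝ} (hT : 0 < T) {F : ℝ → ℝ → ℝ} {u v : ℝ → ℝ → ℝ}
    (hu : IsClassicalSolution T F u) (hv : IsClassicalSolution T F v) :
    ∀ x ∈ Icc (0:ℝ) π, ∀ t ∈ Icc (0:ℝ) T, u x t = v x t := by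
  intro x hx
  have hline : ∀ {w : ℝ → ℝ → ℝ}, IsClassicalSolution T F w → ContinuousOn (fun t => w x t) (Icc 0 T) :=
    fun hw => hw.1.comp (f := fun t => (x, t)) (by fun_prop) fun t ht => ⟨hx, ht⟩
  have : EqOn (fun t => u x t) (fun t => v x t) (Icc 0 T) := by
    refine EqOn.of_subset_closure (s := Ico 0 T) (fun t ht => le_antisymm
      (max_principle hu hv x hx t ht) (max_principle hv hu x hx t ht)) (hline hu) (hline hv)
      Ico_subset_Icc_self ?_
    rw [closure_Ico hT.ne]
  exact this

/-! ### Averaging and asymptotics -/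

lemma per_reduce {β : Type*} {c : ℝ} (hc : 0 < c) {q : ℝ → β} (hq : ∀ τ, 0 ≤ τ → q (τ + c) = q τ)
    {τ : ℝ} (hτ : 0 ≤ τ) : ∃ τ' ∈ Icc 0 c, q τ = q τ' := by
  have h1 : ∀ n : ℕ, ∀ x, 0 ≤ x → q (x + n * c) = q x := by
    intro n
    induction n with
    | zero => intro x _; simp
    | succ n ih =>
      intro x hx
      rw [← ih x hx, ← hq (x + n * c) (by positivity)]
      congr 1; push_cast; ring
  have hf := Nat.floor_le (div_nonneg hτ hc.le)
  have hf2 := Nat.lt_floor_add_one (τ / c)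
  rw [le_div_iff₀ hc] at hf
  rw [div_lt_iff₀ hc] at hf2
  refine ⟨τ - ⌊τ / c⌋₊ * c, ⟨by linarith, by linarith⟩, ?_⟩
  rw [← h1 ⌊τ / c⌋₊ (τ - ⌊τ / c⌋₊ * c) (by linarith), sub_add_cancel]

lemma avg_primitive {p : ℝ → ℝ} (hp : Continuous p) (hper : ∀ τ, 0 ≤ τ → p (τ + 2 * π) = p τ)
    (hz : ∫ τ in (0:ℝ)..(2 * π), p τ = 0) :
    ∃ B : ℝ, ∀ x y ω : ℝ, 0 ≤ x → 0 ≤ y → 0 < ω → |∫ s in x..y, p (ω * s)| ≤ B / ω := by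
  have h2 : (0:ℝ) < 2 * π := by have := pi_pos; positivity
  have hi : ∀ a b, IntervalIntegrable p MeasureTheory.volume a b := fun a b => hp.intervalIntegrable _ _
  have hΦ : ∀ x, 0 ≤ x → ∫ τ in (0:ℝ)..(x + 2 * π), p τ = ∫ τ in (0:ℝ)..x, p τ := by
    intro x hx
    rw [← intervalIntegral.integral_add_adjacent_intervals (hi 0 (2 * π)) (hi (2 * π) _), hz, zero_add]
    have := intervalIntegral.integral_comp_add_right (a := 0) (b := x) p (2 * π)
    rw [zero_add] at this
    rw [← this]
    refine intervalIntegral.integral_congr fun τ hτ => ?_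
    rw [uIcc_of_le hx] at hτ
    exact hper τ hτ.1
  have hcont : Continuous fun x => ∫ τ in (0:ℝ)..x, p τ :=
    intervalIntegral.continuous_primitive hi 0
  obtain ⟨B, hB⟩ := isCompact_Icc.exists_bound_of_continuousOn (s := Icc 0 (2 * π)) hcont.continuousOn
  have hB' : ∀ x, 0 ≤ x → |∫ τ in (0:ℝ)..x, p τ| ≤ B := by
    intro x hx
    obtain ⟨y, hy, e⟩ := per_reduce (q := fun x => ∫ τ in (0:ℝ)..x, p τ) h2 hΦ hx
    rw [e]; exact hB y hy
  refine ⟨2 * B, fun x y ω hx hy hω => ?_⟩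
  rw [intervalIntegral.integral_comp_mul_left p hω.ne',
    ← intervalIntegral.integral_interval_sub_left (hi 0 _) (hi 0 _), smul_eq_mul, abs_mul,
    abs_of_pos (inv_pos.2 hω), div_eq_inv_mul]
  refine mul_le_mul_of_nonneg_left ?_ (inv_pos.2 hω).le
  refine (abs_sub _ _).trans ?_
  linarith [hB' (ω * x) (by positivity), hB' (ω * y) (by positivity)]

lemma averaging {g : ℝ → ℝ → ℝ} (hg : Continuous fun p : ℝ × ℝ => g p.1 p.2)
    (hper : ∀ t, ∀ τ, 0 ≤ τ → g t (τ + 2 * π) = g t τ)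
    (hz : ∀ t, ∫ τ in (0:ℝ)..(2 * π), g t τ = 0) {b : ℝ} (hb : 0 < b) :
    Filter.Tendsto (fun ω => ∫ s in (0:ℝ)..b, g s (ω * s)) Filter.atTop (nhds 0) := by
  have h2 : (0:ℝ) < 2 * π := by have := pi_pos; positivity
  choose B hB using fun t => avg_primitive (p := g t) (by fun_prop) (hper t) (hz t)
  have hii : ∀ ω x y, IntervalIntegrable (fun s => g s (ω * s)) MeasureTheory.volume x y :=
    fun ω x y => Continuous.intervalIntegrable (by fun_prop) _ _
  have hii2 : ∀ t ω x y, IntervalIntegrable (fun s => g t (ω * s)) MeasureTheory.volume x y :=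
    fun t ω x y => Continuous.intervalIntegrable (by fun_prop) _ _
  have key : ∀ η > 0, ∃ S : ℝ, ∀ ω > 0, |∫ s in (0:ℝ)..b, g s (ω * s)| ≤ η * b + S / ω := by
    intro η hη
    have huc := (isCompact_Icc.prod isCompact_Icc :
      IsCompact (Icc 0 b ×ˢ Icc 0 (2 * π))).uniformContinuousOn_of_continuous hg.continuousOn
    rw [Metric.uniformContinuousOn_iff] at huc
    obtain ⟨δ, hδ, huc⟩ := huc η hη
    have hδ' : ∀ s ∈ Icc 0 b, ∀ s' ∈ Icc 0 b, |s - s'| < δ → ∀ τ, 0 ≤ τ →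
        |g s τ - g s' τ| ≤ η := by
      intro s hs s' hs' hd τ hτ
      obtain ⟨τ', hτ', e⟩ := per_reduce (q := fun τ t => g t τ) h2
        (fun τ hτ => funext fun t => hper t τ hτ) hτ
      have e1 := congrFun e s
      have e2 := congrFun e s'
      rw [e1, e2]
      refine (huc (s, τ') ⟨hs, hτ'⟩ (s', τ') ⟨hs', hτ'⟩ ?_).le
      rw [Prod.dist_eq]; simp [Real.dist_eq, hd]
    obtain ⟨K, hK⟩ := exists_nat_gt (b / δ)
    have hK0 : (0:ℝ) < K := (div_pos hb hδ).trans hK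
    have hKδ : b / K < δ := by
      rw [div_lt_iff₀ hδ] at hK; rw [div_lt_iff₀ hK0]; linarith
    have hstep : (0:ℝ) < b / K := div_pos hb hK0
    set p : ℕ → ℝ := fun k => k * (b / K) with hpdef
    have hp0 : p 0 = 0 := by simp [hpdef]
    have hpK : p K = b := by simp only [hpdef]; field_simp
    have hpmem : ∀ k, k ≤ K → p k ∈ Icc 0 b := by
      intro k hk
      refine ⟨by positivity, ?_⟩
      rw [← hpK]
      have : (k:ℝ) ≤ K := by exact_mod_cast hk
      simp only [hpdef]; gcongr
    have hpsucc : ∀ k, p (k+1) = p k + b / K := by intro k; simp only [hpdef]; push_cast; ring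
    refine ⟨∑ k ∈ Finset.range K, B (p k), fun ω hω => ?_⟩
    have hsum := intervalIntegral.sum_integral_adjacent_intervals (a := p) (n := K)
      (μ := MeasureTheory.volume) (f := fun s => g s (ω * s)) (fun k _ => hii ω _ _)
    rw [hp0, hpK] at hsum
    rw [← hsum]
    refine (Finset.abs_sum_le_sum_abs _ _).trans ?_
    have hterm : ∀ k ∈ Finset.range K, |∫ s in p k..p (k+1), g s (ω * s)| ≤
        η * (b / K) + B (p k) / ω := by
      intro k hk
      have hk' := Finset.mem_range.1 hk
      have m1 := hpmem k hk'.le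
      have m2 := hpmem (k+1) hk'
      have hle : p k ≤ p (k+1) := by rw [hpsucc]; linarith
      have e : ∫ s in p k..p (k+1), g s (ω * s) =
          (∫ s in p k..p (k+1), (g s (ω * s) - g (p k) (ω * s))) +
            ∫ s in p k..p (k+1), g (p k) (ω * s) := by
        rw [intervalIntegral.integral_sub (hii _ _ _) (hii2 _ _ _ _)]; ring
      rw [e]
      refine (abs_add_le _ _).trans (add_le_add ?_ (hB _ _ _ _ m1.1 m2.1 hω))
      have := intervalIntegral.norm_integral_le_of_norm_le_const (a := p k) (b := p (k+1))
        (f := fun s => g s (ω * s) - g (p k) (ω * s)) (C := η) (by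
          intro s hs
          rw [uIoc_of_le hle] at hs
          have hs0 : 0 ≤ s := m1.1.trans hs.1.le
          refine hδ' s ⟨hs0, hs.2.trans m2.2⟩ _ m1 ?_ _ (by positivity)
          rw [abs_of_nonneg (by linarith [hs.1])]
          have := hs.2
          rw [hpsucc] at this
          linarith)
      rw [hpsucc, add_sub_cancel_left, abs_of_pos hstep, ← hpsucc] at this
      exact this
    refine (Finset.sum_le_sum hterm).trans ?_
    rw [Finset.sum_add_distrib, Finset.sum_const, Finset.card_range, Finset.sum_div, nsmul_eq_mul]
    refine add_le_add (le_of_eq ?_) le_rfl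
    field_simp
  rw [Metric.tendsto_nhds]
  intro ε hε
  obtain ⟨S, hS⟩ := key (ε / (2 * b)) (by positivity)
  have hS0 : Filter.Tendsto (fun ω : ℝ => S / ω) Filter.atTop (nhds 0) :=
    Filter.Tendsto.div_atTop tendsto_const_nhds Filter.tendsto_id
  filter_upwards [Filter.eventually_gt_atTop 0, hS0.eventually (gt_mem_nhds (half_pos hε))]
    with ω hω hω2
  rw [Real.dist_eq, sub_zero]
  have := hS ω hω
  have e : ε / (2 * b) * b = ε / 2 := by field_simp
  rw [e] at this
  linarith

lemma qq_lower {R : ℝ → ℝ} (hR : Continuous R) {t₀ : ℝ} (ht : 0 < t₀) (hne : R t₀ ≠ 0) :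
    ∃ c > 0, ∀ᶠ n : ℕ in Filter.atTop, c ≤ ((n:ℝ)+1) ^ 2 * |qq ((n:ℝ)+1) R t₀| := by
  have hr : 0 < |R t₀| := abs_pos.2 hne
  set η := |R t₀| / 4 with hη
  have hη0 : 0 < η := by positivity
  obtain ⟨M, hM⟩ := isCompact_Icc.exists_bound_of_continuousOn (s := Icc 0 t₀) hR.continuousOn
  have hM0 : 0 ≤ M := (norm_nonneg _).trans (hM 0 ⟨le_rfl, ht.le⟩)
  obtain ⟨δ, hδ, hcont⟩ := Metric.continuous_iff.1 hR t₀ η hη0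
  have hK : ∀ s ∈ Icc 0 t₀, |R s - R t₀| ≤ η + (2 * M / δ) * (t₀ - s) := by
    intro s hs
    have hs2 := sub_nonneg.2 hs.2
    by_cases h : t₀ - s < δ
    · have := hcont s (by rw [Real.dist_eq, abs_sub_comm, abs_of_nonneg hs2]; exact h)
      rw [Real.dist_eq] at this
      have : 0 ≤ (2 * M / δ) * (t₀ - s) := by positivity
      linarith
    · push Not at h
      have h1 : |R s - R t₀| ≤ 2 * M := by
        refine (abs_sub _ _).trans ?_
        have a1 := hM s hs
        have a2 := hM t₀ ⟨ht.le, le_rfl⟩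
        rw [Real.norm_eq_abs] at a1 a2
        linarith
      have h2 : 2 * M ≤ (2 * M / δ) * (t₀ - s) := by
        rw [div_mul_eq_mul_div, le_div_iff₀ hδ]
        gcongr
      linarith
  set K := 2 * M / δ
  have hK0 : 0 ≤ K := by positivity
  have main : ∀ k : ℝ, 0 < k → |R t₀| * (1 - exp (-k ^ 2 * t₀)) - η - K / k ^ 2
      ≤ k ^ 2 * |qq k R t₀| := by
    intro k hk
    have hk2 : 0 < k ^ 2 := by positivity
    have e1 : k ^ 2 * qq k R t₀ - R t₀ * (1 - exp (-k ^ 2 * t₀)) =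
        ∫ s in (0:ℝ)..t₀, k ^ 2 * (exp (-k ^ 2 * (t₀ - s)) * (R s - R t₀)) := by
      rw [intervalIntegral.integral_const_mul]
      simp_rw [mul_sub (exp _)]
      rw [intervalIntegral.integral_sub (Continuous.intervalIntegrable (by fun_prop) _ _)
        (Continuous.intervalIntegrable (by fun_prop) _ _), intervalIntegral.integral_mul_const,
        int_exp_k hk, qq]
      field_simp
    have e2 : ∫ s in (0:ℝ)..t₀, k ^ 2 * (exp (-k ^ 2 * (t₀ - s)) * (η + K * (t₀ - s))) =
        (η + K / k ^ 2) - (η + K * (t₀ + 1 / k ^ 2)) * exp (-k ^ 2 * t₀) := by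
      rw [intervalIntegral.integral_eq_sub_of_hasDerivAt
        (f := fun s => (η + K * ((t₀ - s) + 1 / k ^ 2)) * exp (-k ^ 2 * (t₀ - s)))]
      · simp; ring
      · intro s _
        have d1 : HasDerivAt (fun s => -k ^ 2 * (t₀ - s)) (k ^ 2) s := by
          simpa using ((hasDerivAt_id s).const_sub t₀).const_mul (-k ^ 2)
        have d2 : HasDerivAt (fun s => η + K * ((t₀ - s) + 1 / k ^ 2)) (-K) s := by
          exact (((((hasDerivAt_id s).const_sub t₀).add_const (1 / k ^ 2)).const_mul K).const_add η).congr_deriv (by ring)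
        exact (d2.mul d1.exp).congr_deriv (by field_simp; ring)
      · exact Continuous.intervalIntegrable (by fun_prop) _ _
    have b := intervalIntegral.norm_integral_le_of_norm_le (a := 0) (b := t₀)
      (μ := MeasureTheory.volume)
      (f := fun s => k ^ 2 * (exp (-k ^ 2 * (t₀ - s)) * (R s - R t₀)))
      (g := fun s => k ^ 2 * (exp (-k ^ 2 * (t₀ - s)) * (η + K * (t₀ - s)))) ht.le
      (Filter.Eventually.of_forall fun s hs => by
        rw [norm_mul, norm_mul, norm_of_nonneg (exp_pos _).le, norm_of_nonneg hk2.le]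
        have := hK s ⟨hs.1.le, hs.2⟩
        rw [← Real.norm_eq_abs] at this
        gcongr)
      (Continuous.intervalIntegrable (by fun_prop) _ _)
    rw [← e1, e2, Real.norm_eq_abs] at b
    have hpos : 0 ≤ (η + K * (t₀ + 1 / k ^ 2)) * exp (-k ^ 2 * t₀) := by positivity
    have hexp : 0 ≤ 1 - exp (-k ^ 2 * t₀) := by
      rw [sub_nonneg]; apply exp_le_one_iff.2; nlinarith
    have tri : |R t₀ * (1 - exp (-k ^ 2 * t₀))| ≤ |k ^ 2 * qq k R t₀| +
        |k ^ 2 * qq k R t₀ - R t₀ * (1 - exp (-k ^ 2 * t₀))| := by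
      have := abs_sub (k ^ 2 * qq k R t₀) (k ^ 2 * qq k R t₀ - R t₀ * (1 - exp (-k ^ 2 * t₀)))
      rwa [sub_sub_cancel] at this
    rw [abs_mul, abs_of_nonneg hexp, abs_mul, abs_of_pos hk2] at tri
    linarith
  have hk : Filter.Tendsto (fun n : ℕ => ((n:ℝ)+1) ^ 2) Filter.atTop Filter.atTop :=
    (Filter.tendsto_pow_atTop two_ne_zero).comp
      (Filter.tendsto_atTop_add_const_right _ _ tendsto_natCast_atTop_atTop)
  have l1 : Filter.Tendsto (fun n : ℕ => exp (-((n:ℝ)+1) ^ 2 * t₀)) Filter.atTop (nhds 0) := by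
    have := Real.tendsto_exp_neg_atTop_nhds_zero.comp (hk.atTop_mul_const ht)
    refine this.congr fun n => ?_
    simp
  have l2 : Filter.Tendsto (fun n : ℕ => K / ((n:ℝ)+1) ^ 2) Filter.atTop (nhds 0) :=
    Filter.Tendsto.div_atTop tendsto_const_nhds hk
  have l3 : Filter.Tendsto (fun n : ℕ => |R t₀| * (1 - exp (-((n:ℝ)+1) ^ 2 * t₀)) - η
      - K / ((n:ℝ)+1) ^ 2) Filter.atTop (nhds (|R t₀| * (1 - 0) - η - 0)) :=
    (((l1.const_sub 1).const_mul _).sub_const η).sub l2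
  refine ⟨|R t₀| / 2, by positivity, ?_⟩
  filter_upwards [l3.eventually (lt_mem_nhds (show |R t₀| / 2 < |R t₀| * (1 - 0) - η - 0 by
    rw [hη]; linarith))] with n hn
  exact hn.le.trans (main _ (by positivity))

lemma inv_bound {R : ℝ → ℝ} (hR : Continuous R) {t₀ : ℝ} (ht : 0 < t₀) (hne : R t₀ ≠ 0) :
    ∃ D : ℝ, ∀ n : ℕ, |qq ((n:ℝ)+1) R t₀|⁻¹ ≤ D * ((n:ℝ)+1) ^ 2 := by
  obtain ⟨c, hc, hev⟩ := qq_lower hR ht hne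
  have hb : Filter.IsBoundedUnder (· ≤ ·) Filter.atTop
      (fun n : ℕ => (((n:ℝ)+1) ^ 2 * |qq ((n:ℝ)+1) R t₀|)⁻¹) := by
    refine ⟨c⁻¹, ?_⟩
    rw [Filter.eventually_map]
    filter_upwards [hev] with n hn
    gcongr
  obtain ⟨D, hD⟩ := hb.bddAbove_range
  refine ⟨D, fun n => ?_⟩
  have := hD ⟨n, rfl⟩
  simp only [mul_inv] at this
  have hk : (0:ℝ) < ((n:ℝ)+1)^2 := by positivity
  rwa [← div_eq_inv_mul, div_le_iff₀ hk] at this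

/-! ### Assembly -/

lemma qq_add (k : ℝ) {ρ σ : ℝ → ℝ} (hρ : Continuous ρ) (hσ : Continuous σ) (t : ℝ) :
    qq k (fun s => ρ s + σ s) t = qq k ρ t + qq k σ t := by
  simp only [qq, mul_add]
  exact intervalIntegral.integral_add (Continuous.intervalIntegrable (by fun_prop) _ _)
    (Continuous.intervalIntegrable (by fun_prop) _ _)

lemma conv_tsum {R1 : ℝ → ℝ → ℝ} (hR1 : Continuous fun p : ℝ × ℝ => R1 p.1 p.2)
    (hper : ∀ t, ∀ τ, 0 ≤ τ → R1 t (τ + 2 * π) = R1 t τ)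
    (hz : ∀ t, ∫ τ in (0:ℝ)..(2 * π), R1 t τ = 0) {t₀ : ℝ} (ht : 0 < t₀)
    {a : ℕ → ℝ} (ha : Summable fun n => |a n|) :
    (∀ ω : ℝ, 0 ≤ ω →
      Summable fun n : ℕ => |a n| * |qq ((n:ℝ)+1) (fun s => R1 s (ω * s)) t₀|) ∧
    Filter.Tendsto (fun ω : ℝ => ∑' n : ℕ, |a n| * |qq ((n:ℝ)+1) (fun s => R1 s (ω * s)) t₀|)
      Filter.atTop (nhds 0) := by
  have h2 : (0:ℝ) < 2 * π := by have := pi_pos; positivity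
  obtain ⟨M, hM⟩ := (isCompact_Icc.prod isCompact_Icc :
      IsCompact (Icc 0 t₀ ×ˢ Icc 0 (2 * π))).exists_bound_of_continuousOn hR1.continuousOn
  have hM' : ∀ s ∈ Icc 0 t₀, ∀ τ, 0 ≤ τ → |R1 s τ| ≤ |M| := by
    intro s hs τ hτ
    obtain ⟨τ', hτ', e⟩ := per_reduce (q := fun τ => R1 s τ) h2 (hper s) hτ
    rw [e]
    exact (hM (s, τ') ⟨hs, hτ'⟩).trans (le_abs_self M)
  have hb : ∀ ω : ℝ, 0 ≤ ω → ∀ n : ℕ,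
      ‖|a n| * |qq ((n:ℝ)+1) (fun s => R1 s (ω * s)) t₀|‖ ≤ |a n| * |M| := by
    intro ω hω n
    rw [norm_mul, Real.norm_eq_abs, Real.norm_eq_abs, abs_abs, abs_abs]
    refine mul_le_mul_of_nonneg_left ?_ (abs_nonneg _)
    exact (qq_bound' (by linarith [n.cast_nonneg (α := ℝ)]) ht.le (abs_nonneg M)
      fun s hs => hM' s hs _ (mul_nonneg hω hs.1)).1
  refine ⟨fun ω hω => Summable.of_norm_bounded (ha.mul_right |M|) (hb ω hω), ?_⟩
  have := tendsto_tsum_of_dominated_convergence (𝓕 := Filter.atTop)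
    (f := fun (ω : ℝ) (n : ℕ) => |a n| * |qq ((n:ℝ)+1) (fun s => R1 s (ω * s)) t₀|)
    (g := fun _ => (0:ℝ)) (ha.mul_right |M|) (by
      intro n
      have h := averaging (g := fun s τ => exp (-((n:ℝ)+1) ^ 2 * (t₀ - s)) * R1 s τ)
        (by fun_prop) (fun t τ hτ => by rw [hper t τ hτ])
        (fun t => by rw [intervalIntegral.integral_const_mul, hz, mul_zero]) ht
      have h' := (h.abs).const_mul |a n|
      simpa [qq] using h')
    (by filter_upwards [Filter.eventually_ge_atTop 0] with ω hω using hb ω hω)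
  simpa using this

lemma solves_iff (T : ℝ) (hT : 0 < T) (r0 : ℝ → ℝ) (r1 : ℝ → ℝ → ℝ)
    (hr0 : ContinuousOn r0 (Icc 0 T))
    (hper : ∀ t ∈ Icc (0:ℝ) T, ∀ τ ∈ Ici (0:ℝ), r1 t (τ + 2 * π) = r1 t τ)
    (hzero : ∀ t ∈ Icc (0:ℝ) T, (∫ τ in (0:ℝ)..(2 * π), r1 t τ) = 0)
    (hr1c : ContinuousOn (fun p : ℝ × ℝ => r1 p.1 p.2) (Icc 0 T ×ˢ Ici 0))
    (t₀ : ℝ) (ht₀ : t₀ ∈ Ioc 0 T) (Λ : ℕ → ℝ)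
    (hΛ : ∀ n : ℕ, Λ n = ∫ s in (0:ℝ)..t₀, exp (-(n:ℝ) ^ 2 * (t₀ - s)) * r0 s)
    (ψ f : ℝ → ℝ) (hf : IsC1 f) (hf0 : f 0 = 0) (hfπ : f π = 0) (a : ℕ → ℝ)
    (ha : Summable fun n => |a n|)
    (hfa : ∀ x ∈ Icc (0:ℝ) π, f x = ∑' n : ℕ, a n * sin (((n:ℝ)+1) * x)) :
    SolvesProblem2 T t₀ r0 r1 ψ f ↔
      ∀ x ∈ Icc (0:ℝ) π, ψ x = ∑' n : ℕ, a n * Λ (n+1) * sin (((n:ℝ)+1) * x) := by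
  have h2π : (0:ℝ) < 2 * π := by have := pi_pos; positivity
  set P : ℝ → ℝ := fun t => (projIcc 0 T hT.le t : ℝ) with hP
  have hPc : Continuous P := continuous_subtype_val.comp continuous_projIcc
  have hPm : ∀ t, P t ∈ Icc 0 T := fun t => (projIcc 0 T hT.le t).2
  have hPe : ∀ t ∈ Icc 0 T, P t = t := fun t ht => by simp [hP, projIcc_of_mem hT.le ht]
  set R0 : ℝ → ℝ := fun t => r0 (P t) with hR0
  set R1 : ℝ → ℝ → ℝ := fun t τ => r1 (P t) (max τ 0) with hR1
  have hR0c : Continuous R0 := hr0.comp_continuous hPc hPm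
  have hR1c : Continuous fun p : ℝ × ℝ => R1 p.1 p.2 :=
    hr1c.comp_continuous (f := fun p : ℝ × ℝ => (P p.1, max p.2 0)) (by fun_prop)
      fun p => ⟨hPm _, mem_Ici.2 (le_max_right p.2 0)⟩
  have hR1p : ∀ t, ∀ τ, 0 ≤ τ → R1 t (τ + 2 * π) = R1 t τ := by
    intro t τ hτ
    simp only [hR1]
    rw [max_eq_left hτ, max_eq_left (by linarith)]
    exact hper _ (hPm t) _ hτ
  have hR1z : ∀ t, ∫ τ in (0:ℝ)..(2 * π), R1 t τ = 0 := by
    intro t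
    refine Eq.trans (intervalIntegral.integral_congr fun τ hτ => ?_) (hzero _ (hPm t))
    rw [uIcc_of_le h2π.le] at hτ
    simp only [hR1]
    rw [max_eq_left hτ.1]
  have hΛq : ∀ n : ℕ, Λ (n+1) = qq ((n:ℝ)+1) R0 t₀ := by
    intro n
    rw [hΛ, qq]
    refine intervalIntegral.integral_congr fun s hs => ?_
    rw [uIcc_of_le ht₀.1.le] at hs
    simp only [hR0]
    rw [hPe s ⟨hs.1, hs.2.trans ht₀.2⟩]
    push_cast
    rfl
  obtain ⟨hsum, hconv⟩ := conv_tsum hR1c hR1p hR1z ht₀.1 ha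
  have hR1ω : ∀ ω : ℝ, Continuous fun s => R1 s (ω * s) := fun ω => by fun_prop
  set U : ℝ → ℝ → ℝ → ℝ := fun ω x t =>
    ∑' n : ℕ, a n * sin (((n:ℝ)+1) * x) * qq ((n:ℝ)+1) (fun s => R0 s + R1 s (ω * s)) t with hU
  have hUsol : ∀ ω : ℝ, 1 ≤ ω →
      IsClassicalSolution T (fun x t => f x * (r0 t + r1 t (ω * t))) (U ω) := by
    intro ω hω
    refine exists_classical ha (hR0c.add (hR1ω ω)) ?_
    intro x hx t ht
    have ht' : t ∈ Icc 0 T := ⟨ht.1.le, ht.2.le⟩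
    rw [← hfa x ⟨hx.1.le, hx.2.le⟩]
    simp only [hR0, hR1, Pi.add_apply]
    rw [hPe t ht', max_eq_left (mul_nonneg (by linarith) ht.1.le)]
  set L : ℝ → ℝ := fun x => ∑' n : ℕ, a n * Λ (n+1) * sin (((n:ℝ)+1) * x) with hL
  obtain ⟨M, hM⟩ := isCompact_Icc.exists_bound_of_continuousOn (s := Icc 0 t₀) hR0c.continuousOn
  have hLs : ∀ x : ℝ, Summable fun n : ℕ => a n * Λ (n+1) * sin (((n:ℝ)+1) * x) := by
    intro x
    refine sinser_summable (a := fun n => a n * Λ (n+1)) ?_ x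
    refine Summable.of_nonneg_of_le (fun n => abs_nonneg _) (fun n => ?_) (ha.mul_right |M|)
    rw [abs_mul, hΛq]
    refine mul_le_mul_of_nonneg_left ?_ (abs_nonneg _)
    exact (qq_bound' (by linarith [n.cast_nonneg (α := ℝ)]) ht₀.1.le (abs_nonneg M)
      fun s hs => (hM s hs).trans (le_abs_self M)).1
  have hUL : ∀ ω : ℝ, 0 ≤ ω → ∀ x, |U ω x t₀ - L x| ≤
      ∑' n : ℕ, |a n| * |qq ((n:ℝ)+1) (fun s => R1 s (ω * s)) t₀| := by
    intro ω hω x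
    have hb : ∀ n : ℕ, ‖a n * sin (((n:ℝ)+1) * x) * qq ((n:ℝ)+1) (fun s => R1 s (ω * s)) t₀‖ ≤
        |a n| * |qq ((n:ℝ)+1) (fun s => R1 s (ω * s)) t₀| := by
      intro n
      rw [norm_mul, norm_mul]
      refine mul_le_mul_of_nonneg_right ?_ (abs_nonneg _)
      exact mul_le_of_le_one_right (abs_nonneg _) (abs_sin_le_one _)
    have e : U ω x t₀ = L x +
        ∑' n : ℕ, a n * sin (((n:ℝ)+1) * x) * qq ((n:ℝ)+1) (fun s => R1 s (ω * s)) t₀ := by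
      simp only [hU, hL]
      rw [← (hLs x).tsum_add (Summable.of_norm_bounded (hsum ω hω) hb)]
      refine tsum_congr fun n => ?_
      rw [qq_add _ hR0c (hR1ω ω), hΛq]
      ring
    rw [e, add_sub_cancel_left]
    exact tsum_of_norm_bounded (hsum ω hω).hasSum hb
  have hlim : ∀ ε > 0, ∃ ω₀ ≥ (1:ℝ), ∀ ω ≥ ω₀, ∀ x, |U ω x t₀ - L x| ≤ ε := by
    intro ε hε
    obtain ⟨ω₁, h1⟩ := Filter.eventually_atTop.1 (hconv.eventually (gt_mem_nhds hε))
    refine ⟨max ω₁ 1, le_max_right _ _, fun ω hω x => ?_⟩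
    have hω1 : 1 ≤ ω := (le_max_right _ _).trans hω
    exact (hUL ω (by linarith) x).trans (h1 ω ((le_max_left _ _).trans hω)).le
  have ht₀' : t₀ ∈ Icc 0 T := ⟨ht₀.1.le, ht₀.2⟩
  constructor
  · rintro ⟨-, -, -, h⟩ x hx
    have h := h U hUsol
    by_contra hne
    have hpos : 0 < |ψ x - L x| := abs_pos.2 (sub_ne_zero.2 hne)
    obtain ⟨ω₁, hω₁, k1⟩ := h (|ψ x - L x| / 3) (by positivity)
    obtain ⟨ω₂, hω₂, k2⟩ := hlim (|ψ x - L x| / 3) (by positivity)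
    have a1 := k1 (max ω₁ ω₂) (le_max_left _ _) x hx
    have a2 := k2 (max ω₁ ω₂) (le_max_right _ _) x
    have a3 := abs_sub_le (ψ x) (U (max ω₁ ω₂) x t₀) (L x)
    rw [abs_sub_comm (ψ x) (U _ x t₀)] at a3
    linarith
  · intro hψ
    refine ⟨hf, hf0, hfπ, fun u hu ε hε => ?_⟩
    obtain ⟨ω₀, hω₀, k⟩ := hlim ε hε
    refine ⟨ω₀, hω₀, fun ω hω x hx => ?_⟩
    have hω1 : 1 ≤ ω := le_trans hω₀ hω
    rw [classical_unique hT (hu ω hω1) (hUsol ω hω1) x hx t₀ ht₀', hψ x hx]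
    exact k ω hω x

lemma sin_succ_pi (n : ℕ) : sin (((n:ℝ)+1) * π) = 0 := by
  have := Real.sin_nat_mul_pi (n+1); push_cast at this; exact this

lemma sinser_isC1 {a : ℕ → ℝ} (ha : Summable fun n : ℕ => ((n:ℝ)+1) * |a n|) :
    IsC1 fun x => ∑' n : ℕ, a n * sin (((n:ℝ)+1) * x) := by
  have hb : ∀ (n : ℕ) (x : ℝ), ‖a n * (cos (((n:ℝ)+1) * x) * ((n:ℝ)+1))‖ ≤ ((n:ℝ)+1) * |a n| := by
    intro n x
    rw [norm_mul, norm_mul, norm_of_nonneg (by positivity : (0:ℝ) ≤ (n:ℝ)+1), mul_comm]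
    refine mul_le_mul_of_nonneg_right ?_ (abs_nonneg _)
    exact mul_le_of_le_one_left (by positivity) (abs_cos_le_one _)
  refine ⟨fun x => ∑' n : ℕ, a n * (cos (((n:ℝ)+1) * x) * ((n:ℝ)+1)),
    (continuous_tsum (fun n => by fun_prop) ha hb).continuousOn, fun x _ => ?_⟩
  refine (hasDerivAt_tsum (g := fun (n : ℕ) x => a n * sin (((n:ℝ)+1) * x)) ha
    (fun n y => ?_) hb (y₀ := 0) (by simp) x).hasDerivWithinAt
  have : HasDerivAt (fun x => ((n:ℝ)+1) * x) ((n:ℝ)+1) y := by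
    simpa using (hasDerivAt_id y).const_mul ((n:ℝ)+1)
  exact this.sin.const_mul _

/-- **Theorem 4, part 1.** If `Λ_n ≠ 0` for all `n ≥ 1` then Problem 2 has exactly one
solution, namely `f(x) = Σ (ψ_n/Λ_n) sin nx`, which is `C¹` and vanishes at `0, π`;
conversely, if some `Λ_n = 0` then Problem 2 does not have a unique solution. -/
theorem problem2_unique_iff
    (T : ℝ) (hT : 0 < T)
    -- `r₀` continuous, `r₁` of class `C^{α,0}`, 2π-periodic in `τ` with zero mean
    (r0 : ℝ → ℝ) (r1 : ℝ → ℝ → ℝ)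
    (hr0 : ContinuousOn r0 (Icc 0 T))
    (hper : ∀ t ∈ Icc (0:ℝ) T, ∀ τ ∈ Ici (0:ℝ), r1 t (τ + 2 * π) = r1 t τ)
    (hzero : ∀ t ∈ Icc (0:ℝ) T, (∫ τ in (0:ℝ)..(2 * π), r1 t τ) = 0)
    (α : ℝ) (hα : α ∈ Ioo (0:ℝ) 1) (C : ℝ)
    (hr1c : ContinuousOn (fun p : ℝ × ℝ => r1 p.1 p.2) (Icc 0 T ×ˢ Ici 0))
    (hr1hold : ∀ τ ∈ Ici (0:ℝ), ∀ t ∈ Icc (0:ℝ) T, ∀ t' ∈ Icc (0:ℝ) T,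
      |r1 t τ - r1 t' τ| ≤ C * |t - t'| ^ α)
    -- the point `t₀` and the numbers `Λ_n`
    (t₀ : ℝ) (ht₀ : t₀ ∈ Ioc 0 T) (hr0t₀ : r0 t₀ ≠ 0)
    (Λ : ℕ → ℝ)
    (hΛ : ∀ n : ℕ, Λ n = ∫ s in (0:ℝ)..t₀, exp (-(n:ℝ) ^ 2 * (t₀ - s)) * r0 s)
    -- the datum `ψ ∈ C⁴([0,π])` with `ψ^{(2k)}(0) = ψ^{(2k)}(π) = 0`, `k = 0,1,2`
    (ψ ψ1 ψ2 ψ3 ψ4 : ℝ → ℝ)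
    (hψ1 : ∀ x ∈ Icc (0:ℝ) π, HasDerivWithinAt ψ (ψ1 x) (Icc 0 π) x)
    (hψ2 : ∀ x ∈ Icc (0:ℝ) π, HasDerivWithinAt ψ1 (ψ2 x) (Icc 0 π) x)
    (hψ3 : ∀ x ∈ Icc (0:ℝ) π, HasDerivWithinAt ψ2 (ψ3 x) (Icc 0 π) x)
    (hψ4 : ∀ x ∈ Icc (0:ℝ) π, HasDerivWithinAt ψ3 (ψ4 x) (Icc 0 π) x)
    (hψ4c : ContinuousOn ψ4 (Icc 0 π))
    (hψb : ψ 0 = 0 ∧ ψ π = 0 ∧ ψ2 0 = 0 ∧ ψ2 π = 0 ∧ ψ4 0 = 0 ∧ ψ4 π = 0)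
    -- Fourier sine coefficients of `ψ`
    (ψc : ℕ → ℝ)
    (hψc : ∀ n : ℕ, ψc n = (2 / π) * ∫ s in (0:ℝ)..π, ψ s * sin ((n:ℝ) * s)) :
    -- part 1: `M₀ = ∅` gives existence and uniqueness, with an explicit solution
    ((∀ n : ℕ, Λ (n + 1) ≠ 0) →
      (∀ x ∈ Icc (0:ℝ) π,
        Summable fun n : ℕ => ψc (n + 1) / Λ (n + 1) * sin (((n:ℝ) + 1) * x)) ∧
      SolvesProblem2 T t₀ r0 r1 ψ
        (fun x => ∑' n : ℕ, ψc (n + 1) / Λ (n + 1) * sin (((n:ℝ) + 1) * x)) ∧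
      (∀ g : ℝ → ℝ, SolvesProblem2 T t₀ r0 r1 ψ g →
        EqOn g (fun x => ∑' n : ℕ, ψc (n + 1) / Λ (n + 1) * sin (((n:ℝ) + 1) * x))
          (Icc 0 π))) ∧
    -- part 2 (converse): if `M₀ ≠ ∅` then Problem 2 does not have a unique solution
    ((∃ n : ℕ, Λ (n + 1) = 0) →
      ¬ ∃ f : ℝ → ℝ, SolvesProblem2 T t₀ r0 r1 ψ f ∧
        ∀ g : ℝ → ℝ, SolvesProblem2 T t₀ r0 r1 ψ g → EqOn g f (Icc 0 π)) := by
  have hC1ψ : IsC1 ψ := ⟨ψ1, fun x hx => (hψ2 x hx).continuousWithinAt, hψ1⟩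
  obtain ⟨b1, b2, b3, b4, b5, b6⟩ := hψb
  have hψser := c1_sinser hC1ψ b1 b2
  have hψsum := c1_coeff_summable hC1ψ b1 b2
  have hψc' : ∀ n : ℕ, ψc (n+1) = (2 / π) * ∫ x in (0:ℝ)..π, ψ x * sin (((n:ℝ)+1) * x) := by
    intro n; rw [hψc]; push_cast; rfl
  simp_rw [← hψc'] at hψser hψsum
  have hiff := fun f hf h0 hπ a ha hfa => solves_iff T hT r0 r1 hr0 hper hzero hr1c t₀ ht₀ Λ hΛ ψ f
    hf h0 hπ a ha hfa
  have hPc : Continuous fun t => (projIcc 0 T hT.le t : ℝ) :=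
    continuous_subtype_val.comp continuous_projIcc
  have ht₀' : t₀ ∈ Icc 0 T := ⟨ht₀.1.le, ht₀.2⟩
  have hRc : Continuous fun t => r0 (projIcc 0 T hT.le t : ℝ) :=
    hr0.comp_continuous hPc fun t => (projIcc 0 T hT.le t).2
  have hΛq : ∀ n : ℕ, Λ (n+1) = qq ((n:ℝ)+1) (fun t => r0 (projIcc 0 T hT.le t : ℝ)) t₀ := by
    intro n
    rw [hΛ, qq]
    refine intervalIntegral.integral_congr fun s hs => ?_
    rw [uIcc_of_le ht₀.1.le] at hs
    rw [projIcc_of_mem hT.le ⟨hs.1, hs.2.trans ht₀.2⟩]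
    push_cast
    rfl
  obtain ⟨M, hM⟩ := isCompact_Icc.exists_bound_of_continuousOn (s := Icc 0 t₀) hRc.continuousOn
  have hΛM : ∀ n : ℕ, |Λ (n+1)| ≤ |M| := by
    intro n
    rw [hΛq]
    exact (qq_bound' (by linarith [n.cast_nonneg (α := ℝ)]) ht₀.1.le (abs_nonneg M)
      fun s hs => (hM s hs).trans (le_abs_self M)).1
  constructor
  · intro hne
    obtain ⟨D, hD⟩ := inv_bound hRc ht₀.1 (by
      rw [projIcc_of_mem hT.le ht₀']; exact hr0t₀)
    simp_rw [← hΛq] at hD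
    have hcd : ∀ {h h' : ℝ → ℝ}, (∀ x ∈ Icc (0:ℝ) π, HasDerivWithinAt h (h' x) (Icc 0 π) x) →
      ContinuousOn h (Icc 0 π) := fun hd x hx => (hd x hx).continuousWithinAt
    have hI : ∀ n : ℕ, ψc (n+1) = (2 / π) *
        (∫ x in (0:ℝ)..π, ψ4 x * sin (((n:ℝ)+1) * x)) / ((n:ℝ)+1) ^ 4 := by
      intro n
      rw [hψc', ibp_sin (hcd hψ2) hψ1 b1 b2, ibp_cos (hcd hψ3) hψ2,
        ibp_sin (hcd hψ4) hψ3 b3 b4, ibp_cos hψ4c hψ4]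
      field_simp
    have hB := summable_div_of_sq (bessel_summable (fun n x => sin (((n:ℝ)+1) * x))
      (fun n => by fun_prop) orth_sin ψ4 hψ4c)
    have hka : Summable fun n : ℕ => ((n:ℝ)+1) * |ψc (n+1) / Λ (n+1)| := by
      refine Summable.of_nonneg_of_le (fun n => by positivity) (fun n => ?_)
        (hB.mul_left ((2 / π) * D))
      have hk : (0:ℝ) < (n:ℝ)+1 := by positivity
      rw [hI, abs_div, div_eq_mul_inv _ |Λ (n+1)|, abs_div, abs_mul,
        abs_of_pos (div_pos two_pos pi_pos), abs_of_pos (pow_pos hk 4)]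
      have hp := pi_pos
      calc _ ≤ ((n:ℝ)+1) * (2 / π * |∫ x in (0:ℝ)..π, ψ4 x * sin (((n:ℝ)+1) * x)| /
              ((n:ℝ)+1) ^ 4 * (D * ((n:ℝ)+1) ^ 2)) := by
            gcongr
            exact hD n
        _ = _ := by field_simp
    have ha : Summable fun n : ℕ => |ψc (n+1) / Λ (n+1)| := by
      refine Summable.of_nonneg_of_le (fun n => abs_nonneg _) (fun n => ?_) hka
      have := abs_nonneg (ψc (n+1) / Λ (n+1))
      nlinarith [n.cast_nonneg (α := ℝ)]
    refine ⟨fun x _ => sinser_summable ha x, ?_, ?_⟩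
    · refine (hiff _ (sinser_isC1 hka) (by simp) (by simp [sin_succ_pi]) _ ha
        (fun x _ => rfl)).2 fun x hx => ?_
      rw [hψser x hx]
      exact tsum_congr fun n => by rw [div_mul_cancel₀ _ (hne n)]
    · intro g hg x hx
      have hs := c1_coeff_summable hg.1 hg.2.1 hg.2.2.1
      have he := c1_sinser hg.1 hg.2.1 hg.2.2.1
      have hψg := (hiff g hg.1 hg.2.1 hg.2.2.1 _ hs he).1 hg
      have hs2 : Summable fun n : ℕ =>
          |((2 / π) * ∫ x in (0:ℝ)..π, g x * sin (((n:ℝ)+1) * x)) * Λ (n+1)| := by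
        refine Summable.of_nonneg_of_le (fun n => abs_nonneg _) (fun n => ?_) (hs.mul_right |M|)
        rw [abs_mul]
        exact mul_le_mul_of_nonneg_left (hΛM n) (abs_nonneg _)
      rw [he x hx]
      refine tsum_congr fun m => ?_
      congr 1
      rw [eq_div_iff (hne m), hψc']
      have hint : ∫ x in (0:ℝ)..π, ψ x * sin (((m:ℝ)+1) * x) = _ :=
        (intervalIntegral.integral_congr fun y hy => by
          rw [uIcc_of_le pi_pos.le] at hy
          rw [hψg y hy]).trans (sinser_coeff hs2 m)
      rw [hint]
      have := pi_pos.ne'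
      field_simp
  · rintro ⟨m, hm⟩ ⟨f, hf, huniq⟩
    have hs := c1_coeff_summable hf.1 hf.2.1 hf.2.2.1
    have he := c1_sinser hf.1 hf.2.1 hf.2.2.1
    have hψf := (hiff f hf.1 hf.2.1 hf.2.2.1 _ hs he).1 hf
    set c : ℕ → ℝ := fun n => (2 / π) * ∫ x in (0:ℝ)..π, f x * sin (((n:ℝ)+1) * x) with hc
    have hsing : ∀ x : ℝ, HasSum (fun n : ℕ => (if n = m then (1:ℝ) else 0) * sin (((n:ℝ)+1) * x))
        (sin (((m:ℝ)+1) * x)) := by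
      intro x
      have := hasSum_ite_eq m (sin (((m:ℝ)+1) * x))
      refine this.congr_fun ?_
      intro n
      by_cases h : n = m <;> simp [h]
    have hsol : SolvesProblem2 T t₀ r0 r1 ψ (fun x => f x + sin (((m:ℝ)+1) * x)) := by
      refine (hiff _ ?_ (by simp [hf.2.1]) (by simp [hf.2.2.1, sin_succ_pi])
        (fun n => c n + if n = m then (1:ℝ) else 0) ?_ ?_).2 ?_
      · obtain ⟨f', hf'c, hf'd⟩ := hf.1
        refine ⟨fun x => f' x + cos (((m:ℝ)+1) * x) * ((m:ℝ)+1), by fun_prop, fun x hx => ?_⟩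
        have : HasDerivAt (fun x => ((m:ℝ)+1) * x) ((m:ℝ)+1) x := by
          simpa using (hasDerivAt_id x).const_mul ((m:ℝ)+1)
        exact (hf'd x hx).add this.sin.hasDerivWithinAt
      · refine Summable.of_nonneg_of_le (fun n => abs_nonneg _) (fun n => abs_add_le _ _)
          (hs.add ?_)
        refine summable_of_ne_finset_zero (s := {m}) fun n hn => ?_
        simp at hn
        simp [hn]
      · intro x hx
        rw [he x hx, ← (hsing x).tsum_eq, ← (sinser_summable hs x).tsum_add (hsing x).summable]
        exact tsum_congr fun n => by ring
      · intro x hx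
        rw [hψf x hx]
        refine tsum_congr fun n => ?_
        by_cases h : n = m
        · simp [h, hm]
        · simp [h, hc]
    have hx0 : π / (2 * ((m:ℝ)+1)) ∈ Icc (0:ℝ) π := by
      have := pi_pos
      refine ⟨by positivity, ?_⟩
      rw [div_le_iff₀ (by positivity)]
      nlinarith [m.cast_nonneg (α := ℝ)]
    have h1 := huniq _ hsol hx0
    have h2 : ((m:ℝ)+1) * (π / (2 * ((m:ℝ)+1))) = π / 2 := by field_simp
    simp only [h2, sin_pi_div_two] at h1
    linarith
end
end
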